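/- arXiv:2409.07371 — 2 statements merged into one kernel-verified Lean document; each statement's English description precedes it below -/
import Mathlib

section
/- Let n ≥ 1 and suppose (A,b) satisfies Setting B. Then there exists a measurable ℤⁿ-periodic function r : ℝⁿ → ℝ with ∫_Y r² < ∞ such that r ≥ 0 almost everywhere, ∫_Y r = 1, and ∫_Y r(x)(A(x):D²φ(x) + b(x)·∇φ(x)) dx = 0 for every twice continuously differentiable ℤⁿ-periodic function φ : ℝⁿ → ℝ; moreover, r is unique up to equality almost everywhere. -/
open MeasureTheory

noncomputable section

/-- The unit cell `Y = (0,1)^n`. -/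
def unitCell (n : ℕ) : Set (Fin n → ℝ) := Set.univ.pi fun _ => Set.Ioo (0 : ℝ) 1

/-- Frobenius norm squared of a matrix. -/
def frobSq {n : ℕ} (M : Matrix (Fin n) (Fin n) ℝ) : ℝ := ∑ i, ∑ j, (M i j) ^ 2

/-- Frobenius inner product of two matrices. -/
def frobInner {n : ℕ} (M N : Matrix (Fin n) (Fin n) ℝ) : ℝ := ∑ i, ∑ j, M i j * N i j

/-- Euclidean norm squared of a vector. -/
def euclSq {n : ℕ} (v : Fin n → ℝ) : ℝ := ∑ i, (v i) ^ 2

/-- Euclidean dot product. -/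
def dotc {n : ℕ} (v w : Fin n → ℝ) : ℝ := ∑ i, v i * w i

/-- `ℤⁿ`-periodicity of a function on `ℝⁿ`. -/
def IsPeriodic {n : ℕ} {α : Type*} (f : (Fin n → ℝ) → α) : Prop :=
  ∀ (x : Fin n → ℝ) (k : Fin n → ℤ), f (x + fun i => (k i : ℝ)) = f x

/-- Partial derivative in direction `i`. -/
def pd {n : ℕ} (f : (Fin n → ℝ) → ℝ) (i : Fin n) (x : Fin n → ℝ) : ℝ :=
  fderiv ℝ f x (Pi.single i 1)

/-- Gradient. -/
def grad {n : ℕ} (f : (Fin n → ℝ) → ℝ) (x : Fin n → ℝ) : Fin n → ℝ := fun i => pd f i x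

/-- Hessian matrix. -/
def hess {n : ℕ} (f : (Fin n → ℝ) → ℝ) (x : Fin n → ℝ) : Matrix (Fin n) (Fin n) ℝ :=
  Matrix.of fun i j => pd (pd f j) i x

/-- Laplacian. -/
def lap {n : ℕ} (f : (Fin n → ℝ) → ℝ) (x : Fin n → ℝ) : ℝ := ∑ i, pd (pd f i) i x

/-- Jacobian matrix of a vector field: `(jac w x) i j = ∂_j w_i (x)`. -/
def jac {n : ℕ} (w : (Fin n → ℝ) → Fin n → ℝ) (x : Fin n → ℝ) : Matrix (Fin n) (Fin n) ℝ :=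
  Matrix.of fun i j => pd (fun y => w y i) j x

/-- Divergence of a vector field. -/
def divg {n : ℕ} (w : (Fin n → ℝ) → Fin n → ℝ) (x : Fin n → ℝ) : ℝ :=
  ∑ i, pd (fun y => w y i) i x

/-- Setting B: symmetric-valued, measurable, `ℤⁿ`-periodic, essentially bounded coefficients,
uniform ellipticity, and the Cordes-type condition with constant `δ ∈ (n/(n+π²), 1]`. -/
structure SettingB {n : ℕ} (A : (Fin n → ℝ) → Matrix (Fin n) (Fin n) ℝ)
    (b : (Fin n → ℝ) → Fin n → ℝ) (lam Lam δ : ℝ) : Prop where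
  symm : ∀ x, (A x).IsSymm
  measA : ∀ i j, Measurable fun x => A x i j
  measb : ∀ i, Measurable fun x => b x i
  perA : IsPeriodic A
  perb : IsPeriodic b
  bddA : ∃ C : ℝ, ∀ᵐ x ∂(volume : Measure (Fin n → ℝ)), frobSq (A x) ≤ C
  bddb : ∃ C : ℝ, ∀ᵐ x ∂(volume : Measure (Fin n → ℝ)), euclSq (b x) ≤ C
  lam_pos : 0 < lam
  lam_le_Lam : lam ≤ Lam
  ellip : ∀ᵐ x ∂(volume : Measure (Fin n → ℝ)), ∀ ξ : Fin n → ℝ,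
    lam * euclSq ξ ≤ dotc ξ (Matrix.mulVec (A x) ξ) ∧
      dotc ξ (Matrix.mulVec (A x) ξ) ≤ Lam * euclSq ξ
  delta_mem : δ ∈ Set.Ioc ((n : ℝ) / ((n : ℝ) + Real.pi ^ 2)) 1
  cordes : ∀ᵐ x ∂(volume : Measure (Fin n → ℝ)),
    (frobSq (A x) + euclSq (b x)) / (Matrix.trace (A x)) ^ 2 ≤ 1 / ((n : ℝ) - 1 + δ)

/-- The renormalization function `γ = tr A / (|A|² + |b|²)`. -/
def gam {n : ℕ} (A : (Fin n → ℝ) → Matrix (Fin n) (Fin n) ℝ)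
    (b : (Fin n → ℝ) → Fin n → ℝ) (x : Fin n → ℝ) : ℝ :=
  Matrix.trace (A x) / (frobSq (A x) + euclSq (b x))

/-- The constant `κ = (δ − n/(n+π²))·(n+π²)/π²`. -/
def kappa (n : ℕ) (δ : ℝ) : ℝ :=
  (δ - (n : ℝ) / ((n : ℝ) + Real.pi ^ 2)) * (((n : ℝ) + Real.pi ^ 2) / Real.pi ^ 2)

/-- The invariant measure: measurable, `ℤⁿ`-periodic, square-integrable over `Y`,
with unit mass over `Y`, solving the stationary FPK equation in the very weak sense. -/
def IsInvariantMeasure {n : ℕ} (A : (Fin n → ℝ) → Matrix (Fin n) (Fin n) ℝ)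
    (b : (Fin n → ℝ) → Fin n → ℝ) (r : (Fin n → ℝ) → ℝ) : Prop :=
  Measurable r ∧ IsPeriodic r ∧
    IntegrableOn (fun x => (r x) ^ 2) (unitCell n) ∧
    (∫ x in unitCell n, r x) = 1 ∧
    ∀ φ : (Fin n → ℝ) → ℝ, ContDiff ℝ 2 φ → IsPeriodic φ →
      (∫ x in unitCell n,
        r x * (frobInner (A x) (hess φ x) + dotc (b x) (grad φ x))) = 0

/-- The bilinear form `B₂`. -/
def B2 {n : ℕ} (A : (Fin n → ℝ) → Matrix (Fin n) (Fin n) ℝ)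
    (b : (Fin n → ℝ) → Fin n → ℝ) (v w : (Fin n → ℝ) → Fin n → ℝ) : ℝ :=
  (∫ x in unitCell n,
    divg v x * (frobInner (gam A b x • A x) (jac w x) + dotc (gam A b x • b x) (w x)))
  + (1 / 2) * ∫ x in unitCell n,
      frobInner (jac v x - (jac v x).transpose) (jac w x - (jac w x).transpose)

/-!
On the torus, the Cordes condition says that the renormalized operator `γ (A : D² + b · ∇)` has
coefficients uniformly close to those of the Laplacian, so that it equals `(1 + K) Δ` with `‖K‖ < 1`
on `L²`. Extending `1 + K` by the identity on constants, the stationary densities of the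
renormalized operator are the functions orthogonal to the image of the nonzero frequencies under
`1 + K`. Since `1 + K` is invertible, they form a line, spanned by `r = ((1 + K)⁻¹)* 1`. The
invariant measures of `A : D² + b · ∇` are those densities multiplied by `γ`.

For the sign of `r`, approximate the coefficients in `L²` by trigonometric polynomials, without
enlarging their distance to the Laplacian by more than an arbitrarily small amount. For a continuous
`g ≥ 0`, the Neumann series then yields trigonometric polynomials `u` with `(1 + K) u` uniformly
close to `g`: the degrees of the terms grow linearly, so their sup norms exceed their geometrically
decaying `L²` norms by a polynomial factor only. At a maximum of the smooth function `Δ⁻¹ (u - ∫ u)`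
the second-order test shows that `∫ u` is at least a value of `(1 + K) u`, whence `∫ r g ≥ 0`.
-/

section

namespace InvariantDensity

attribute [local instance] instMeasureSpaceUnitAddCircle

open UnitAddTorus ComplexConjugate Filter Topology
open scoped ENNReal

local instance : Measure.IsAddHaarMeasure (volume : Measure UnitAddCircle) :=
  inferInstanceAs (Measure.IsAddHaarMeasure AddCircle.haarAddCircle)

local instance : IsProbabilityMeasure (volume : Measure UnitAddCircle) :=
  inferInstanceAs (IsProbabilityMeasure AddCircle.haarAddCircle)

section PositiveDuality

variable {X : Type*} [TopologicalSpace X] [CompactSpace X] [NormalSpace X] [MeasurableSpace X]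
  [BorelSpace X] {μ : Measure X} [IsFiniteMeasure μ] [μ.WeaklyRegular]

lemma inner_posPart_nonneg {ρ : Lp ℝ 2 μ}
    (h : ∀ g : C(X, ℝ), 0 ≤ g → 0 ≤ ∫ x, ρ x * g x ∂μ) (u : Lp ℝ 2 μ) :
    0 ≤ inner ℝ ρ (Lp.posPart u) := by
  refine (ContinuousMap.toLp_denseRange ℝ μ ℝ (p := 2) (by simp)).induction_on
    (p := fun u => 0 ≤ inner ℝ ρ (Lp.posPart u)) u
    (isClosed_le continuous_const (continuous_const.inner Lp.continuous_posPart)) fun g => ?_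
  rw [L2.inner_def]
  refine (h (g ⊔ 0) le_sup_right).trans_eq (integral_congr_ae ?_)
  filter_upwards [Lp.coeFn_posPart (ContinuousMap.toLp 2 μ ℝ g),
    ContinuousMap.coeFn_toLp (𝕜 := ℝ) (p := 2) μ g] with x hpos hg
  rw [hpos, hg, Real.inner_apply]
  rfl

lemma ae_nonneg_of_forall_integral_mul_nonneg {ρ : X → ℝ} (hρ : MemLp ρ 2 μ)
    (h : ∀ g : C(X, ℝ), 0 ≤ g → 0 ≤ ∫ x, ρ x * g x ∂μ) : 0 ≤ᵐ[μ] ρ := by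
  set u := hρ.toLp ρ
  have u_eq : u =ᵐ[μ] ρ := hρ.coeFn_toLp
  have inner_eq : inner ℝ u (Lp.negPart u) = -inner ℝ (Lp.negPart u) (Lp.negPart u) := by
    rw [L2.inner_def, L2.inner_def, ← integral_neg]
    refine integral_congr_ae ?_
    filter_upwards [Lp.coeFn_negPart_eq_max u] with x hx
    rw [hx, Real.inner_apply, Real.inner_apply]
    rcases le_total (-u x) 0 with hu | hu <;> simp [hu]
  have inner_nonneg : 0 ≤ inner ℝ u (Lp.negPart u) :=
    inner_posPart_nonneg (fun g hg => (h g hg).trans_eq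
      (integral_congr_ae (u_eq.mono fun x hx => by simp only [hx]))) (-u)
  have negPart_eq_zero : Lp.negPart u = 0 :=
    real_inner_self_nonpos.1 (by linarith)
  filter_upwards [u_eq, Lp.coeFn_negPart_eq_max u, Lp.coeFn_zero ℝ 2 μ] with x hx hneg hzero
  rw [negPart_eq_zero, hzero, hx] at hneg
  simpa using (max_eq_right_iff.1 hneg.symm)

end PositiveDuality

/-- Complex-valued square-integrable functions on the torus. -/
abbrev TorusL2 (d : Type*) [Fintype d] : Type _ := Lp ℂ 2 (volume : Measure (UnitAddTorus d))

/-- The inclusion of the continuous functions on the torus into `L²`. -/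
abbrev toL2 {d : Type*} [Fintype d] : C(UnitAddTorus d, ℂ) →L[ℂ] TorusL2 d :=
  ContinuousMap.toLp 2 volume ℂ

/-- The bilinear pairing `∑ i, aᵢ zᵢ` of a real and a complex vector. -/
def pairing {ι : Type*} [Fintype ι] (a : EuclideanSpace ℝ ι) (z : EuclideanSpace ℂ ι) : ℂ :=
  ∑ i, (a i : ℂ) * z i

/-- `K` is the operator on `L²(𝕋ᵈ)` with symbol `α(x) · m(k)`, that is, the variable-coefficient
combination `∑ i, αᵢ mᵢ(D)` of Fourier multipliers. -/
def HasSymbol {d ι : Type*} [Fintype d] [Fintype ι] (K : TorusL2 d →L[ℂ] TorusL2 d)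
    (α : UnitAddTorus d → EuclideanSpace ℝ ι) (m : (d → ℤ) → EuclideanSpace ℂ ι) : Prop :=
  ∀ k, K (mFourierLp 2 k) =ᵐ[volume] fun x => pairing (α x) (m k) * mFourier k x

section Operator

variable {d ι : Type*} [Fintype d] [Fintype ι]

lemma norm_toL2_le (f : C(UnitAddTorus d, ℂ)) : ‖toL2 f‖ ≤ ‖f‖ := by
  have norm_le_one : ‖(toL2 : C(UnitAddTorus d, ℂ) →L[ℂ] TorusL2 d)‖ ≤ 1 :=
    (ContinuousMap.toLp_norm_le volume).trans (by simp [measureUnivNNReal])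
  simpa using toL2.le_of_opNorm_le norm_le_one f

lemma norm_mFourier_apply (k : d → ℤ) (x : UnitAddTorus d) : ‖mFourier k x‖ = 1 :=
  (norm_prod _ _).trans (Finset.prod_eq_one fun _ _ => Circle.norm_coe _)

lemma inner_eq_integral (u v : TorusL2 d) : inner ℂ u v = ∫ x, conj (u x) * v x := by
  rw [L2.inner_def]
  congr with x
  rw [RCLike.inner_apply, mul_comm]

lemma norm_sq_eq_integral (f : TorusL2 d) : ‖f‖ ^ 2 = ∫ x, ‖f x‖ ^ 2 := by
  have h := inner_eq_integral f f
  simp only [Complex.conj_mul', inner_self_eq_norm_sq_to_K, ← Complex.ofReal_pow] at h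
  rw [integral_complex_ofReal] at h
  exact Complex.ofReal_injective (by simpa using h)

lemma integrable_norm_sq (f : TorusL2 d) : Integrable fun x => ‖f x‖ ^ 2 :=
  (Lp.memLp f).integrable_norm_pow two_ne_zero

lemma toL2_sum_smul_mFourier (s : Finset (d → ℤ)) (c : (d → ℤ) → ℂ) :
    toL2 (∑ k ∈ s, c k • mFourier k) = ∑ k ∈ s, c k • mFourierLp 2 k := by
  simp only [map_sum, map_smul, mFourierLp]

lemma norm_sq_sum_smul_mFourierLp (s : Finset (d → ℤ)) (c : (d → ℤ) → ℂ) :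
    ‖∑ k ∈ s, c k • mFourierLp (d := d) 2 k‖ ^ 2 = ∑ k ∈ s, ‖c k‖ ^ 2 := by
  have h := orthonormal_mFourier.inner_sum (𝕜 := ℂ) (v := mFourierLp (d := d) 2) c c s
  simp only [Complex.conj_mul', inner_self_eq_norm_sq_to_K] at h
  exact Complex.ofReal_injective (by simpa using h)

lemma coeFn_sum_smul {σ : Type*} (s : Finset σ) (c : σ → ℂ) {w : σ → TorusL2 d}
    {f : σ → UnitAddTorus d → ℂ} (hw : ∀ k, w k =ᵐ[volume] f k) :
    (∑ k ∈ s, c k • w k : TorusL2 d) =ᵐ[volume] fun x => ∑ k ∈ s, c k * f k x := by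
  have hsmul : ∀ᵐ x, ∀ k ∈ s, (c k • w k : TorusL2 d) x = c k * f k x := by
    refine (Finset.eventually_all s).2 fun k _ => ?_
    filter_upwards [Lp.coeFn_smul (c k) (w k), hw k] with x hc hk
    rw [hc, Pi.smul_apply, hk, smul_eq_mul]
  filter_upwards [Lp.coeFn_finsetSum s fun k => c k • w k, hsmul] with x hsum hterm
  rw [hsum, Finset.sum_apply]
  exact Finset.sum_congr rfl hterm

lemma denseRange_linearCombination_mFourierLp :
    DenseRange (Finsupp.linearCombination ℂ (mFourierLp (d := d) 2)) := by
  have h := span_mFourierLp_closure_eq_top (d := d) (p := 2) (by simp)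
  rw [← Finsupp.range_linearCombination] at h
  exact Submodule.dense_iff_topologicalClosure_eq_top.2 h

lemma norm_pairing_le (a : EuclideanSpace ℝ ι) (z : EuclideanSpace ℂ ι) :
    ‖pairing a z‖ ≤ ‖a‖ * ‖z‖ := by
  rw [EuclideanSpace.norm_eq, EuclideanSpace.norm_eq]
  calc ‖pairing a z‖ ≤ ∑ i, ‖a i‖ * ‖z i‖ :=
        (norm_sum_le _ _).trans_eq (by simp only [norm_mul, Complex.norm_real])
    _ ≤ _ := Real.sum_mul_le_sqrt_mul_sqrt _ _ _

lemma continuous_pairing_left (z : EuclideanSpace ℂ ι) : Continuous fun a => pairing a z := by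
  unfold pairing
  fun_prop

variable {α : UnitAddTorus d → EuclideanSpace ℝ ι} {m : (d → ℤ) → EuclideanSpace ℂ ι} {R M : ℝ}

lemma memLp_pairing_mul_mFourier {p : ℝ≥0∞} (hα : MemLp α p) (z : EuclideanSpace ℂ ι)
    (k : d → ℤ) : MemLp (fun x => pairing (α x) z * mFourier k x) p := by
  refine hα.of_le_mul (((continuous_pairing_left z).comp_aestronglyMeasurable
    hα.aestronglyMeasurable).mul (by fun_prop)) (c := ‖z‖) (Eventually.of_forall fun x => ?_)
  rw [norm_mul, norm_mFourier_apply, mul_one, mul_comm]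
  exact norm_pairing_le _ _

lemma norm_sq_sum_smul_le (hm : ∀ k, ‖m k‖ ≤ M) (hαR : ∀ᵐ x, ‖α x‖ ≤ R)
    {w : (d → ℤ) → TorusL2 d}
    (hw : ∀ k, w k =ᵐ[volume] fun x => pairing (α x) (m k) * mFourier k x)
    (s : Finset (d → ℤ)) (c : (d → ℤ) → ℂ) :
    ‖∑ k ∈ s, c k • w k‖ ^ 2 ≤ (R * M) ^ 2 * ‖∑ k ∈ s, c k • mFourierLp (d := d) 2 k‖ ^ 2 := by
  set F : ι → TorusL2 d := fun i => ∑ k ∈ s, (c k * m k i) • mFourierLp 2 k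
  have F_apply : ∀ᵐ x, ∀ i, F i x = ∑ k ∈ s, c k * m k i * mFourier k x :=
    ae_all_iff.2 fun i => coeFn_sum_smul s (fun k => c k * m k i) (coeFn_mFourierLp 2)
  have pointwise : ∀ᵐ x, ‖(∑ k ∈ s, c k • w k : TorusL2 d) x‖ ^ 2 ≤ R ^ 2 * ∑ i, ‖F i x‖ ^ 2 := by
    filter_upwards [F_apply, hαR, coeFn_sum_smul s c hw] with x hF hR hsum
    have sum_eq : (∑ k ∈ s, c k • w k : TorusL2 d) x =
        pairing (α x) (WithLp.toLp 2 fun i => F i x) := by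
      simp only [hsum, pairing, hF, Finset.sum_mul, Finset.mul_sum]
      rw [Finset.sum_comm]
      exact Finset.sum_congr rfl fun i _ => Finset.sum_congr rfl fun k _ => by ring
    rw [sum_eq, ← EuclideanSpace.norm_sq_eq (WithLp.toLp 2 fun i => F i x), ← mul_pow]
    have h := norm_pairing_le (α x) (WithLp.toLp 2 fun i => F i x)
    gcongr
    exact h.trans (by gcongr)
  calc ‖∑ k ∈ s, c k • w k‖ ^ 2 ≤ ∫ x, R ^ 2 * ∑ i, ‖F i x‖ ^ 2 := by
        rw [norm_sq_eq_integral]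
        exact integral_mono_ae (integrable_norm_sq _)
          ((integrable_finsetSum _ fun i _ => integrable_norm_sq (F i)).const_mul _) pointwise
    _ = R ^ 2 * ∑ i, ∑ k ∈ s, ‖c k * m k i‖ ^ 2 := by
        rw [integral_const_mul, integral_finsetSum _ fun i _ => integrable_norm_sq (F i)]
        simp only [← norm_sq_eq_integral, F, norm_sq_sum_smul_mFourierLp]
    _ = R ^ 2 * ∑ k ∈ s, ‖c k‖ ^ 2 * ‖m k‖ ^ 2 := by
        simp only [EuclideanSpace.norm_sq_eq, Finset.mul_sum, norm_mul, mul_pow]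
        rw [Finset.sum_comm]
    _ ≤ R ^ 2 * ∑ k ∈ s, ‖c k‖ ^ 2 * M ^ 2 := by
        gcongr with k
        exact hm k
    _ = _ := by rw [norm_sq_sum_smul_mFourierLp, ← Finset.sum_mul]; ring

theorem exists_hasSymbol (hα : AEStronglyMeasurable α) (hαR : ∀ᵐ x, ‖α x‖ ≤ R)
    (hm : ∀ k, ‖m k‖ ≤ M) :
    ∃ K : TorusL2 d →L[ℂ] TorusL2 d, ‖K‖ ≤ R * M ∧ HasSymbol K α m := by
  have memLp_column k := memLp_pairing_mul_mFourier (MemLp.of_bound hα R hαR (p := 2)) (m k) k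
  set w : (d → ℤ) → TorusL2 d := fun k => (memLp_column k).toLp _
  have hw k : w k =ᵐ[volume] fun x => pairing (α x) (m k) * mFourier k x :=
    (memLp_column k).coeFn_toLp
  obtain ⟨x, hx⟩ := hαR.exists
  have hRM : 0 ≤ R * M := mul_nonneg ((norm_nonneg _).trans hx) ((norm_nonneg _).trans (hm 0))
  have bound (c : (d → ℤ) →₀ ℂ) : ‖Finsupp.linearCombination ℂ w c‖ ≤
      R * M * ‖Finsupp.linearCombination ℂ (mFourierLp 2) c‖ := by
    refine abs_le_of_sq_le_sq' ?_ (by positivity) |>.2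
    rw [mul_pow]
    exact norm_sq_sum_smul_le hm hαR hw c.support c
  refine ⟨(Finsupp.linearCombination ℂ w).extendOfNorm
    (Finsupp.linearCombination ℂ (mFourierLp 2)),
    LinearMap.opNorm_extendOfNorm_le denseRange_linearCombination_mFourierLp hRM bound,
    fun k => ?_⟩
  have h := LinearMap.extendOfNorm_eq denseRange_linearCombination_mFourierLp ⟨_, bound⟩
    (Finsupp.single k 1)
  simp only [Finsupp.linearCombination_single, one_smul] at h
  rw [h]
  exact hw k

end Operator

section TrigPolynomial

variable {d : Type*} [Fintype d] [DecidableEq d]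

/-- The frequencies `k ∈ ℤᵈ` with `|kᵢ| ≤ N` for all `i`. -/
def freqBox (d : Type*) [Fintype d] [DecidableEq d] (N : ℕ) : Finset (d → ℤ) :=
  Fintype.piFinset fun _ => Finset.Icc (-N : ℤ) N

/-- Trigonometric polynomials of degree at most `N` in each variable. -/
def trigPolynomial (d : Type*) [Fintype d] [DecidableEq d] (N : ℕ) :
    Submodule ℂ C(UnitAddTorus d, ℂ) :=
  Submodule.span ℂ (mFourier '' (freqBox d N : Set (d → ℤ)))

lemma mem_freqBox {N : ℕ} {k : d → ℤ} : k ∈ freqBox d N ↔ ∀ i, |k i| ≤ N := by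
  simp [freqBox, abs_le]

lemma zero_mem_freqBox (N : ℕ) : 0 ∈ freqBox d N := by simp [mem_freqBox]

lemma card_freqBox (N : ℕ) : (freqBox d N).card = (2 * N + 1) ^ Fintype.card d := by
  simp only [freqBox, Fintype.card_piFinset, Int.card_Icc, Finset.prod_const, Finset.card_univ]
  congr 1
  omega

lemma trigPolynomial_mono : Monotone (trigPolynomial d) := fun N N' h => by
  refine Submodule.span_mono (Set.image_mono fun k hk => ?_)
  simp only [Finset.mem_coe, mem_freqBox] at hk ⊢
  exact fun i => (hk i).trans (by exact_mod_cast h)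

lemma mFourier_mem_trigPolynomial {N : ℕ} {k : d → ℤ} (hk : k ∈ freqBox d N) :
    mFourier k ∈ trigPolynomial d N :=
  Submodule.subset_span ⟨k, hk, rfl⟩

lemma mem_trigPolynomial_iff {N : ℕ} {p : C(UnitAddTorus d, ℂ)} :
    p ∈ trigPolynomial d N ↔ ∃ c : (d → ℤ) → ℂ, p = ∑ k ∈ freqBox d N, c k • mFourier k := by
  constructor
  · intro hp
    obtain ⟨c, hc⟩ := (Submodule.mem_span_image_finset_iff_exists_fun ℂ).1 hp
    refine ⟨fun k => if h : k ∈ freqBox d N then c ⟨k, h⟩ else 0, ?_⟩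
    rw [← hc, ← Finset.sum_coe_sort (freqBox d N)]
    simp
  · rintro ⟨c, rfl⟩
    exact Submodule.sum_smul_mem _ c fun k hk => mFourier_mem_trigPolynomial hk

lemma norm_le_of_mem_trigPolynomial {N : ℕ} {p : C(UnitAddTorus d, ℂ)}
    (hp : p ∈ trigPolynomial d N) : ‖p‖ ≤ (2 * N + 1) ^ Fintype.card d * ‖toL2 p‖ := by
  obtain ⟨c, rfl⟩ := mem_trigPolynomial_iff.1 hp
  have norm_coeff_le : ∀ k ∈ freqBox d N,
      ‖c k • mFourier (d := d) k‖ ≤ ‖toL2 (∑ k ∈ freqBox d N, c k • mFourier (d := d) k)‖ := by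
    intro k hk
    rw [norm_smul, mFourier_norm, mul_one, toL2_sum_smul_mFourier]
    refine abs_le_of_sq_le_sq' ?_ (norm_nonneg _) |>.2
    rw [norm_sq_sum_smul_mFourierLp]
    exact Finset.single_le_sum (f := fun k => ‖c k‖ ^ 2) (fun _ _ => sq_nonneg _) hk
  refine (norm_sum_le_of_le _ norm_coeff_le).trans_eq ?_
  rw [Finset.sum_const, card_freqBox, nsmul_eq_mul]
  push_cast
  rfl

lemma mul_mem_trigPolynomial {N N' : ℕ} {p q : C(UnitAddTorus d, ℂ)}
    (hp : p ∈ trigPolynomial d N) (hq : q ∈ trigPolynomial d N') :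
    p * q ∈ trigPolynomial d (N + N') := by
  have h := Submodule.mul_mem_mul hp hq
  rw [trigPolynomial, trigPolynomial, Submodule.span_mul_span] at h
  refine Submodule.span_mono ?_ h
  rintro _ ⟨_, ⟨k, hk, rfl⟩, _, ⟨l, hl, rfl⟩, rfl⟩
  refine ⟨k + l, ?_, ContinuousMap.ext fun x => mFourier_add⟩
  simp only [Finset.mem_coe, mem_freqBox] at hk hl ⊢
  push_cast
  exact fun i => (abs_add_le _ _).trans (add_le_add (hk i) (hl i))

lemma star_mem_trigPolynomial {N : ℕ} {p : C(UnitAddTorus d, ℂ)}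
    (hp : p ∈ trigPolynomial d N) : star p ∈ trigPolynomial d N := by
  obtain ⟨c, rfl⟩ := mem_trigPolynomial_iff.1 hp
  rw [star_sum]
  refine Submodule.sum_mem _ fun k hk => ?_
  have star_mFourier : star (mFourier k) = mFourier (-k) :=
    ContinuousMap.ext fun x => mFourier_neg.symm
  rw [star_smul, star_mFourier]
  exact Submodule.smul_mem _ _ (mFourier_mem_trigPolynomial (by simpa [mem_freqBox] using hk))

lemma span_range_mFourier_le_iSup :
    Submodule.span ℂ (Set.range mFourier) ≤ ⨆ N, trigPolynomial d N := by
  rw [Submodule.span_le]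
  rintro _ ⟨k, rfl⟩
  refine Submodule.mem_iSup_of_mem (∑ i, (k i).natAbs)
    (mFourier_mem_trigPolynomial (mem_freqBox.2 fun i => ?_))
  rw [Int.abs_eq_natAbs]
  exact_mod_cast Finset.single_le_sum (f := fun i => (k i).natAbs) (fun _ _ => Nat.zero_le _)
    (Finset.mem_univ i)

lemma exists_mem_trigPolynomial_norm_sub_lt (f : C(UnitAddTorus d, ℂ)) {ε : ℝ} (hε : 0 < ε) :
    ∃ N, ∃ p ∈ trigPolynomial d N, ‖f - p‖ < ε := by
  have hf : f ∈ (Submodule.span ℂ (Set.range (mFourier (d := d)))).topologicalClosure := by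
    rw [span_mFourier_closure_eq_top]
    trivial
  obtain ⟨p, hp, hpε⟩ := Metric.mem_closure_iff.1 hf ε hε
  obtain ⟨N, hN⟩ := (Submodule.mem_iSup_of_directed _ trigPolynomial_mono.directed_le).1
    (span_range_mFourier_le_iSup hp)
  exact ⟨N, p, hN, by rwa [← dist_eq_norm]⟩

/-- The inclusion of the real-valued into the complex-valued continuous functions. -/
def complexify {X : Type*} [TopologicalSpace X] (f : C(X, ℝ)) : C(X, ℂ) :=
  ⟨fun x => f x, by fun_prop⟩

lemma exists_complexify_mem_trigPolynomial_norm_sub_lt (f : C(UnitAddTorus d, ℝ)) {ε : ℝ}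
    (hε : 0 < ε) :
    ∃ N, ∃ g : C(UnitAddTorus d, ℝ), complexify g ∈ trigPolynomial d N ∧ ‖f - g‖ < ε := by
  obtain ⟨N, p, hp, hfp⟩ := exists_mem_trigPolynomial_norm_sub_lt (complexify f) hε
  refine ⟨N, ⟨fun x => (p x).re, by fun_prop⟩, ?_, ?_⟩
  · have re_eq : complexify ⟨fun x => (p x).re, by fun_prop⟩ = (1 / 2 : ℂ) • (p + star p) := by
      ext x
      simp [complexify, Complex.add_conj]
    rw [re_eq]
    exact Submodule.smul_mem _ _ (Submodule.add_mem _ hp (star_mem_trigPolynomial hp))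
  · refine lt_of_le_of_lt ((ContinuousMap.norm_le _ (norm_nonneg _)).2 fun x => ?_) hfp
    simpa [complexify] using (Complex.abs_re_le_norm _).trans
      ((complexify f - p).norm_coe_le_norm x)

/-- The `i`-th coordinate of a vector-valued continuous function, regarded as complex-valued. -/
def complexCoord {X ι : Type*} [TopologicalSpace X] (a : C(X, EuclideanSpace ℝ ι)) (i : ι) :
    C(X, ℂ) :=
  complexify ⟨fun x => a x i, by fun_prop⟩

lemma exists_complexCoord_mem_trigPolynomial {ι : Type*} [Fintype ι]
    (G : C(UnitAddTorus d, EuclideanSpace ℝ ι)) {ε : ℝ} (hε : 0 < ε) :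
    ∃ N, ∃ P : C(UnitAddTorus d, EuclideanSpace ℝ ι),
      (∀ i, complexCoord P i ∈ trigPolynomial d N) ∧ ∀ x, ‖P x - G x‖ < ε := by
  obtain ⟨η, hη, toLp_lt⟩ : ∃ η > 0, ∀ v : ι → ℝ, ‖v‖ < η → ‖WithLp.toLp 2 v‖ < ε := by
    simpa using Metric.continuousAt_iff.1
      ((PiLp.continuous_toLp 2 fun _ : ι => ℝ).continuousAt (x := 0)) ε hε
  choose N g hg hGg using fun i => exists_complexify_mem_trigPolynomial_norm_sub_lt
    (⟨fun x => G x i, by fun_prop⟩ : C(UnitAddTorus d, ℝ)) hη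
  refine ⟨∑ i, N i, ⟨fun x => WithLp.toLp 2 fun i => g i x, by fun_prop⟩, fun i => ?_, fun x => ?_⟩
  · exact trigPolynomial_mono (Finset.single_le_sum (fun _ _ => Nat.zero_le _)
      (Finset.mem_univ i)) (hg i)
  · refine toLp_lt (fun i => g i x - G x i) ((pi_norm_lt_iff hη).2 fun i => ?_)
    rw [norm_sub_rev]
    exact (ContinuousMap.norm_coe_le_norm _ x).trans_lt (hGg i)

end TrigPolynomial

section CoefficientApproximation

lemma norm_div_max_smul_sub_le {E : Type*} [NormedAddCommGroup E] [NormedSpace ℝ E] {R : ℝ}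
    (hR : 0 < R) {x y : E} (hy : ‖y‖ ≤ R) : ‖(R / max R ‖x‖) • x - y‖ ≤ 2 * ‖x - y‖ := by
  have retract : ‖(R / max R ‖x‖) • x - x‖ ≤ ‖x - y‖ := by
    rcases le_total ‖x‖ R with hx | hx
    · simp [max_eq_left hx, hR.ne']
    · have hx0 : 0 < ‖x‖ := hR.trans_le hx
      have factor_nonpos : R / ‖x‖ - 1 ≤ 0 := sub_nonpos.2 ((div_le_one hx0).2 hx)
      calc ‖(R / max R ‖x‖) • x - x‖ = ‖(R / ‖x‖ - 1) • x‖ := by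
            rw [max_eq_right hx, sub_smul, one_smul]
        _ = ‖x‖ - R := by
            rw [norm_smul, Real.norm_of_nonpos factor_nonpos]
            field_simp
            ring
        _ ≤ ‖x - y‖ := by linarith [norm_sub_norm_le x y]
  calc _ ≤ ‖(R / max R ‖x‖) • x - x‖ + ‖x - y‖ := norm_sub_le_norm_sub_add_norm_sub _ _ _
    _ ≤ _ := by linarith

lemma exists_continuous_norm_le_eLpNorm_sub_le {X E : Type*} [TopologicalSpace X] [NormalSpace X]
    [CompactSpace X] [MeasurableSpace X] [BorelSpace X] {μ : Measure X} [IsFiniteMeasure μ]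
    [μ.WeaklyRegular] [NormedAddCommGroup E] [NormedSpace ℝ E] {α : X → E} {R : ℝ} (hR : 0 < R)
    (hα : AEStronglyMeasurable α μ) (hαR : ∀ᵐ x ∂μ, ‖α x‖ ≤ R) {ε : ℝ≥0∞} (hε : ε ≠ 0) :
    ∃ G : C(X, E), (∀ x, ‖G x‖ ≤ R) ∧ eLpNorm (fun x => G x - α x) 2 μ ≤ ε := by
  obtain ⟨g, hg, -⟩ := (MemLp.of_bound hα R hαR).exists_boundedContinuous_eLpNorm_sub_le
    (p := 2) (by simp) (ε := ε / 2) (by simpa using hε)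
  have hmax x : 0 < max R ‖g x‖ := lt_max_of_lt_left hR
  refine ⟨⟨fun x => (R / max R ‖g x‖) • g x, ?_⟩, fun x => ?_, ?_⟩
  · exact (continuous_const.div (by fun_prop) fun x => (hmax x).ne').smul g.continuous
  · rw [ContinuousMap.coe_mk, norm_smul, Real.norm_of_nonneg (by positivity), div_mul_eq_mul_div,
      div_le_iff₀ (hmax x)]
    gcongr
    exact le_max_right _ _
  · calc _ ≤ ENNReal.ofReal 2 * eLpNorm (α - ⇑g) 2 μ :=
          eLpNorm_le_mul_eLpNorm_of_ae_le_mul (hαR.mono fun x hx => by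
            rw [Pi.sub_apply, norm_sub_rev (α x)]
            exact norm_div_max_smul_sub_le hR hx) 2
      _ ≤ 2 * (ε / 2) := by
          rw [ENNReal.ofReal_ofNat]
          gcongr
      _ = ε := ENNReal.mul_div_cancel two_ne_zero (by simp)

lemma exists_trigPolynomial_coeff_near {d ι : Type*} [Fintype d] [DecidableEq d] [Fintype ι]
    {α : UnitAddTorus d → EuclideanSpace ℝ ι} {R R' : ℝ} (hR : 0 < R) (hRR' : R < R')
    (hα : AEStronglyMeasurable α) (hαR : ∀ᵐ x, ‖α x‖ ≤ R) {ε : ℝ} (hε : 0 < ε) :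
    ∃ N, ∃ P : C(UnitAddTorus d, EuclideanSpace ℝ ι),
      (∀ i, complexCoord P i ∈ trigPolynomial d N) ∧ (∀ x, ‖P x‖ ≤ R') ∧
      eLpNorm (fun x => P x - α x) 2 volume ≤ ENNReal.ofReal ε := by
  obtain ⟨G, hGR, hGα⟩ := exists_continuous_norm_le_eLpNorm_sub_le hR hα hαR
    (ENNReal.ofReal_pos.2 (half_pos hε)).ne'
  obtain ⟨N, P, hP, hPG⟩ := exists_complexCoord_mem_trigPolynomial G
    (lt_min (sub_pos.2 hRR') (half_pos hε))
  refine ⟨N, P, hP, fun x => ?_, ?_⟩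
  · have h := (hPG x).le.trans (min_le_left _ _)
    linarith [norm_le_norm_add_norm_sub' (P x) (G x), hGR x]
  · calc _ = eLpNorm ((fun x => P x - G x) + fun x => G x - α x) 2 volume := by
          congr with x
          simp
      _ ≤ eLpNorm (fun x => P x - G x) 2 volume + eLpNorm (fun x => G x - α x) 2 volume :=
          eLpNorm_add_le (by fun_prop) (by fun_prop) one_le_two
      _ ≤ ENNReal.ofReal (ε / 2) + ENNReal.ofReal (ε / 2) := by
          gcongr
          refine (eLpNorm_le_of_ae_bound (C := ε / 2) (Eventually.of_forall fun x =>
            (hPG x).le.trans (min_le_right _ _))).trans_eq ?_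
          simp
      _ = ENNReal.ofReal ε := by
          rw [← ENNReal.ofReal_add (by positivity) (by positivity), add_halves]

end CoefficientApproximation

section Neumann

lemma mul_norm_le_norm_add_apply {E : Type*} [NormedAddCommGroup E] [NormedSpace ℂ E]
    {K : E →L[ℂ] E} {θ : ℝ} (hK : ‖K‖ ≤ θ) (f : E) : (1 - θ) * ‖f‖ ≤ ‖f + K f‖ := by
  have h := norm_sub_le_norm_add f (K f)
  linarith [K.le_of_opNorm_le hK f]

lemma exists_inverse_id_add {E : Type*} [NormedAddCommGroup E] [NormedSpace ℂ E]
    [CompleteSpace E] {K : E →L[ℂ] E} (hK : ‖K‖ < 1) :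
    ∃ G : E →L[ℂ] E, (∀ f, G (f + K f) = f) ∧ ∀ w, G w + K (G w) = w := by
  set U := Units.oneSub (-K) (by rwa [norm_neg])
  refine ⟨↑U⁻¹, fun f => ?_, fun w => ?_⟩
  · simpa [U] using DFunLike.congr_fun U.inv_mul f
  · simpa [U] using DFunLike.congr_fun U.mul_inv w

lemma tendsto_affine_pow_mul_geometric (a b : ℝ) (n : ℕ) {θ : ℝ} (hθ : |θ| < 1) :
    Tendsto (fun j : ℕ => (a + b * j) ^ n * θ ^ j) atTop (𝓝 0) := by
  simp only [add_pow, mul_pow, Finset.sum_mul]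
  rw [← Finset.sum_const_zero (s := Finset.range (n + 1))]
  refine tendsto_finsetSum _ fun i _ => ?_
  simpa [mul_assoc, mul_left_comm, mul_comm] using
    (tendsto_pow_const_mul_const_pow_of_abs_lt_one (n - i) hθ).const_mul
      (a ^ i * b ^ (n - i) * n.choose i)

variable {d ι : Type*} [Fintype d] [Fintype ι] {m : (d → ℤ) → EuclideanSpace ℂ ι}
  {P : C(UnitAddTorus d, EuclideanSpace ℝ ι)} {K : TorusL2 d →L[ℂ] TorusL2 d}

lemma HasSymbol.apply_toL2 (hK : HasSymbol K P m) (s : Finset (d → ℤ)) (c : (d → ℤ) → ℂ) :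
    K (toL2 (∑ k ∈ s, c k • mFourier k)) =
      toL2 (∑ k ∈ s, c k • ∑ i, m k i • (complexCoord P i * mFourier k)) := by
  have apply_mFourierLp k :
      K (mFourierLp 2 k) = toL2 (∑ i, m k i • (complexCoord P i * mFourier k)) := by
    refine Lp.ext ((hK k).trans (.trans (.of_forall fun x => ?_)
      (ContinuousMap.coeFn_toLp (𝕜 := ℂ) volume _).symm))
    simp only [pairing, Finset.sum_mul, ContinuousMap.coe_sum, Finset.sum_apply,
      ContinuousMap.coe_smul, Pi.smul_apply, ContinuousMap.coe_mul, Pi.mul_apply, smul_eq_mul]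
    exact Finset.sum_congr rfl fun i _ => by simp [complexCoord, complexify]; ring
  rw [toL2_sum_smul_mFourier]
  simp only [map_sum, map_smul, apply_mFourierLp]

variable [DecidableEq d] {D N : ℕ}

lemma HasSymbol.exists_apply_toL2_eq (hK : HasSymbol K P m)
    (hP : ∀ i, complexCoord P i ∈ trigPolynomial d D) {p : C(UnitAddTorus d, ℂ)}
    (hp : p ∈ trigPolynomial d N) : ∃ q ∈ trigPolynomial d (D + N), K (toL2 p) = toL2 q := by
  obtain ⟨c, rfl⟩ := mem_trigPolynomial_iff.1 hp
  refine ⟨_, ?_, hK.apply_toL2 _ c⟩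
  exact Submodule.sum_smul_mem _ c fun k hk => Submodule.sum_smul_mem _ (m k) fun i _ =>
    mul_mem_trigPolynomial (hP i) (mFourier_mem_trigPolynomial hk)

lemma HasSymbol.exists_pow_apply_toL2_eq (hK : HasSymbol K P m)
    (hP : ∀ i, complexCoord P i ∈ trigPolynomial d D) {p : C(UnitAddTorus d, ℂ)}
    (hp : p ∈ trigPolynomial d N) (j : ℕ) :
    ∃ q ∈ trigPolynomial d (N + j * D), ((-K) ^ j) (toL2 p) = toL2 q := by
  induction j with
  | zero => exact ⟨p, by simpa using hp, rfl⟩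
  | succ j ih =>
    obtain ⟨q, hq, hpq⟩ := ih
    obtain ⟨q', hq', hqq'⟩ := hK.exists_apply_toL2_eq hP hq
    refine ⟨-q', Submodule.neg_mem _ (by convert hq' using 2; ring), ?_⟩
    rw [pow_succ', mul_apply_eq_comp, hpq, neg_apply, hqq', map_neg]

-- The degree of `(-K) ^ j p` grows linearly in `j`, so its sup norm exceeds its `L²` norm by a
-- polynomial factor only; the geometric decay of the latter makes the Neumann remainder uniformly
-- small.
lemma HasSymbol.exists_approx_solution (hK : HasSymbol K P m)
    (hP : ∀ i, complexCoord P i ∈ trigPolynomial d D) (hK1 : ‖K‖ < 1) (g : C(UnitAddTorus d, ℂ))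
    {ε : ℝ} (hε : 0 < ε) :
    ∃ N, ∃ u ∈ trigPolynomial d N, ∃ q, ‖q‖ ≤ ε ∧ toL2 u + K (toL2 u) = toL2 (g - q) := by
  obtain ⟨N, p, hp, hgp⟩ := exists_mem_trigPolynomial_norm_sub_lt g (half_pos hε)
  choose v hv hKv using hK.exists_pow_apply_toL2_eq hP hp
  have norm_v_le (j : ℕ) : ‖v j‖ ≤
      ((2 * N + 1 : ℝ) + 2 * D * j) ^ Fintype.card d * ‖K‖ ^ j * ‖toL2 p‖ := by
    have h := norm_le_of_mem_trigPolynomial (hv j)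
    have norm_pow_le : ‖toL2 (v j)‖ ≤ ‖K‖ ^ j * ‖toL2 p‖ := by
      rw [← hKv]
      have : Nontrivial (TorusL2 d) := ⟨_, _, orthonormal_mFourier.ne_zero 0⟩
      refine ((-K) ^ j).le_of_opNorm_le ?_ _
      simpa using norm_pow_le (-K) j
    calc ‖v j‖ ≤ _ := h
      _ ≤ (2 * (N + j * D : ℕ) + 1) ^ Fintype.card d * (‖K‖ ^ j * ‖toL2 p‖) := by gcongr
      _ = _ := by push_cast; ring
  have tendsto_zero := (tendsto_affine_pow_mul_geometric (2 * N + 1) (2 * D) (Fintype.card d)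
    (by simpa using hK1 : |‖K‖| < 1)).mul_const ‖toL2 p‖
  rw [zero_mul] at tendsto_zero
  obtain ⟨J, hJ⟩ := (tendsto_zero.eventually (ge_mem_nhds (half_pos hε))).exists
  have telescope (j : ℕ) : toL2 (v j) + K (toL2 (v j)) = toL2 (v j) - toL2 (v (j + 1)) := by
    rw [← hKv (j + 1), pow_succ', mul_apply_eq_comp, hKv, neg_apply,
      sub_neg_eq_add]
  refine ⟨N + J * D, ∑ j ∈ Finset.range J, v j, Submodule.sum_mem _ fun j hj =>
    trigPolynomial_mono ?_ (hv j), g - p + v J, ?_, ?_⟩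
  · have := (Finset.mem_range.1 hj).le
    gcongr
  · linarith [norm_add_le (g - p) (v J), norm_v_le J]
  · simp only [map_sum, ← Finset.sum_add_distrib, telescope]
    rw [Finset.sum_range_sub' fun j => toL2 (v j), ← hKv 0, pow_zero, one_apply_eq_self,
      ← map_sub]
    congr 1
    abel

end Neumann

section Positivity

variable {d ι : Type*} [Fintype d] [Fintype ι]

/-- The weak maximum principle for the operators with symbol `1 + α(x) · m(k)`, `‖α‖ ≤ 1`: applied
to a trigonometric polynomial with coefficients `c`, they cannot exceed the mean `c 0`
everywhere. -/
def WeakMaximumPrinciple (m : (d → ℤ) → EuclideanSpace ℂ ι) : Prop :=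
  ∀ s : Finset (d → ℤ), 0 ∈ s → ∀ c : (d → ℤ) → ℂ, ∃ x, ∀ a : EuclideanSpace ℝ ι, ‖a‖ ≤ 1 →
    (∑ k ∈ s, c k * ((1 + pairing a (m k)) * mFourier k x)).re ≤ (c 0).re

lemma abs_re_inner_mFourierLp_zero_le (f : TorusL2 d) :
    |(inner ℂ (mFourierLp 2 0) f).re| ≤ ‖f‖ := by
  refine (Complex.abs_re_le_norm _).trans ((norm_inner_le_norm _ _).trans_eq ?_)
  rw [orthonormal_mFourier.norm_eq_one, one_mul]

variable {α : UnitAddTorus d → EuclideanSpace ℝ ι} {m : (d → ℤ) → EuclideanSpace ℂ ι} {R R' M : ℝ}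
  {K K' : TorusL2 d →L[ℂ] TorusL2 d} {P : C(UnitAddTorus d, EuclideanSpace ℝ ι)}

lemma HasSymbol.norm_sub_apply_mFourierLp_le (hK : HasSymbol K α m) (hK' : HasSymbol K' P m)
    (hm : ∀ k, ‖m k‖ ≤ M) {η : ℝ} (hη : 0 ≤ η)
    (hPα : eLpNorm (fun x => P x - α x) 2 volume ≤ ENNReal.ofReal η) (k : d → ℤ) :
    ‖(K' - K) (mFourierLp 2 k)‖ ≤ M * η := by
  have hM : 0 ≤ M := (norm_nonneg _).trans (hm 0)
  rw [Lp.norm_def]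
  refine ENNReal.toReal_le_of_le_ofReal (by positivity) ?_
  calc _ ≤ ENNReal.ofReal M * eLpNorm (fun x => P x - α x) 2 volume := by
        refine eLpNorm_le_mul_eLpNorm_of_ae_le_mul ?_ 2
        filter_upwards [hK k, hK' k, Lp.coeFn_sub (K' (mFourierLp 2 k)) (K (mFourierLp 2 k))]
          with x hx hx' hsub
        have pairing_sub : pairing (P x) (m k) - pairing (α x) (m k) =
            pairing (P x - α x) (m k) := by
          simp [pairing, sub_mul]
        rw [sub_apply, hsub, Pi.sub_apply, hx, hx', ← sub_mul, pairing_sub,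
          norm_mul, norm_mFourier_apply, mul_one, mul_comm M]
        exact (norm_pairing_le _ _).trans (by gcongr; exact hm k)
    _ ≤ _ := by
        rw [ENNReal.ofReal_mul hM]
        gcongr

section TrigPolynomialCoefficients

variable [DecidableEq d] {D : ℕ}

lemma HasSymbol.exists_trigPolynomial_near (hK : HasSymbol K α m) (hR : 0 < R) (hRR' : R < R')
    (hα : AEStronglyMeasurable α) (hαR : ∀ᵐ x, ‖α x‖ ≤ R) (hm : ∀ k, ‖m k‖ ≤ M)
    (hKR : ‖K‖ ≤ R * M) (f : TorusL2 d) {ε : ℝ} (hε : 0 < ε) :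
    ∃ D, ∃ P : C(UnitAddTorus d, EuclideanSpace ℝ ι), ∃ K' : TorusL2 d →L[ℂ] TorusL2 d,
      (∀ i, complexCoord P i ∈ trigPolynomial d D) ∧ (∀ x, ‖P x‖ ≤ R') ∧ HasSymbol K' P m ∧
      ‖K'‖ ≤ R' * M ∧ ‖(K' - K) f‖ ≤ ε := by
  have hM : 0 ≤ M := (norm_nonneg _).trans (hm 0)
  have hR' : 0 < R' := hR.trans hRR'
  obtain ⟨δ, hδ, hδε⟩ : ∃ δ > 0, 2 * R' * M * δ ≤ ε / 2 :=
    ⟨ε / 2 / (2 * R' * M + 1), by positivity, by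
      rw [mul_div_left_comm]
      exact mul_le_of_le_one_right (by positivity) ((div_le_one (by positivity)).2 (by linarith))⟩
  obtain ⟨c, hc⟩ := denseRange_linearCombination_mFourierLp.exists_dist_lt f hδ
  set p := Finsupp.linearCombination ℂ (mFourierLp (d := d) 2) c with hp
  set C := ∑ k ∈ c.support, ‖c k‖
  obtain ⟨η, hη, hηε⟩ : ∃ η > 0, C * M * η ≤ ε / 2 :=
    ⟨ε / 2 / (C * M + 1), by positivity, by
      rw [mul_div_left_comm]
      exact mul_le_of_le_one_right (by positivity) ((div_le_one (by positivity)).2 (by linarith))⟩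
  obtain ⟨D, P, hP, hPR', hPα⟩ := exists_trigPolynomial_coeff_near hR hRR' hα hαR hη
  obtain ⟨K', hK'R', hK'⟩ := exists_hasSymbol P.continuous.aestronglyMeasurable
    (.of_forall hPR') hm
  refine ⟨D, P, K', hP, hPR', hK', hK'R', ?_⟩
  have far : ‖(K' - K) (f - p)‖ ≤ ε / 2 := by
    have opNorm_le : ‖K' - K‖ ≤ 2 * R' * M := by
      have : R * M ≤ R' * M := by gcongr
      linarith [norm_sub_le K' K]
    refine ((K' - K).le_of_opNorm_le_of_le opNorm_le ?_).trans hδε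
    exact (dist_eq_norm f p ▸ hc).le
  have near : ‖(K' - K) p‖ ≤ ε / 2 := by
    rw [hp, Finsupp.linearCombination_apply, Finsupp.sum, map_sum]
    refine (norm_sum_le_of_le _ fun k _ => ?_).trans
      (b := ∑ k ∈ c.support, ‖c k‖ * (M * η)) ?_
    · rw [map_smul, norm_smul]
      gcongr
      exact hK.norm_sub_apply_mFourierLp_le hK' hm hη.le hPα k
    · rwa [← Finset.sum_mul, ← mul_assoc]
  calc ‖(K' - K) f‖ = ‖(K' - K) (f - p) + (K' - K) p‖ := by rw [← map_add, sub_add_cancel]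
    _ ≤ ε := by linarith [norm_add_le ((K' - K) (f - p)) ((K' - K) p)]

lemma HasSymbol.exists_re_le_re_coeff (hK : HasSymbol K P m) (hP : ∀ x, ‖P x‖ ≤ 1)
    (hmax : WeakMaximumPrinciple m) {N : ℕ} {u w : C(UnitAddTorus d, ℂ)}
    (hu : u ∈ trigPolynomial d N) (huw : toL2 u + K (toL2 u) = toL2 w) :
    ∃ x, (w x).re ≤ (inner ℂ (mFourierLp 2 0) (toL2 u)).re := by
  obtain ⟨c, rfl⟩ := mem_trigPolynomial_iff.1 hu
  obtain ⟨x, hx⟩ := hmax _ (zero_mem_freqBox N) c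
  refine ⟨x, ?_⟩
  rw [hK.apply_toL2, ← map_add] at huw
  have w_apply : w x = ∑ k ∈ freqBox d N, c k * ((1 + pairing (P x) (m k)) * mFourier k x) := by
    rw [← ContinuousMap.toLp_injective volume huw]
    simp [complexCoord, complexify, pairing, add_mul, mul_add, Finset.sum_add_distrib,
      Finset.sum_mul, mul_assoc, mul_left_comm]
  have inner_eq : inner ℂ (mFourierLp 2 0) (toL2 (∑ k ∈ freqBox d N, c k • mFourier k)) = c 0 := by
    rw [toL2_sum_smul_mFourier]
    exact orthonormal_mFourier.inner_right_sum c (zero_mem_freqBox N)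
  rw [w_apply, inner_eq]
  exact hx (P x) (hP x)

lemma HasSymbol.re_inner_nonneg_of_trigPolynomial (hK : HasSymbol K P m)
    (hPD : ∀ i, complexCoord P i ∈ trigPolynomial d D) (hP : ∀ x, ‖P x‖ ≤ 1) (hK1 : ‖K‖ < 1)
    (hmax : WeakMaximumPrinciple m) {g : C(UnitAddTorus d, ℂ)} (hg : ∀ x, 0 ≤ (g x).re)
    {f : TorusL2 d} (hf : f + K f = toL2 g) : 0 ≤ (inner ℂ (mFourierLp 2 0) f).re := by
  have gap : 0 < 1 - ‖K‖ := sub_pos.2 hK1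
  have lower_bound : ∀ ε > 0, -(ε + ε / (1 - ‖K‖)) ≤ (inner ℂ (mFourierLp 2 0) f).re := by
    intro ε hε
    obtain ⟨N, u, hu, q, hq, huq⟩ := hK.exists_approx_solution hPD hK1 g hε
    obtain ⟨x, hx⟩ := hK.exists_re_le_re_coeff hP hmax hu huq
    have u_bound : -ε ≤ (inner ℂ (mFourierLp 2 0) (toL2 u)).re := by
      have := (Complex.re_le_norm (q x)).trans ((q.norm_coe_le_norm x).trans hq)
      rw [ContinuousMap.sub_apply, Complex.sub_re] at hx
      linarith [hg x]
    have error_bound : ‖f - toL2 u‖ ≤ ε / (1 - ‖K‖) := by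
      rw [le_div_iff₀' gap]
      refine (mul_norm_le_norm_add_apply le_rfl _).trans ?_
      have error_eq : f - toL2 u + K (f - toL2 u) = toL2 q := by
        rw [map_sub K, sub_add_sub_comm, hf, huq, map_sub, sub_sub_cancel]
      rw [error_eq]
      exact (norm_toL2_le q).trans hq
    have := neg_le_of_abs_le ((abs_re_inner_mFourierLp_zero_le _).trans error_bound)
    rw [inner_sub_right, Complex.sub_re] at this
    linarith
  have tendsto_zero : Tendsto (fun ε => -(ε + ε / (1 - ‖K‖))) (𝓝[>] 0) (𝓝 0) :=
    tendsto_nhdsWithin_of_tendsto_nhds (Continuous.tendsto' (by fun_prop) _ _ (by simp))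
  exact le_of_tendsto tendsto_zero (eventually_mem_nhdsWithin.mono lower_bound)

end TrigPolynomialCoefficients

theorem HasSymbol.re_inner_nonneg (hK : HasSymbol K α m) (hR : 0 < R) (hM : 1 ≤ M)
    (hRM : R * M < 1) (hα : AEStronglyMeasurable α) (hαR : ∀ᵐ x, ‖α x‖ ≤ R) (hm : ∀ k, ‖m k‖ ≤ M)
    (hKR : ‖K‖ ≤ R * M) (hmax : WeakMaximumPrinciple m) {g : C(UnitAddTorus d, ℂ)}
    (hg : ∀ x, 0 ≤ (g x).re) {f : TorusL2 d} (hf : f + K f = toL2 g) :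
    0 ≤ (inner ℂ (mFourierLp 2 0) f).re := by
  classical
  obtain ⟨R', hRR', hR'M⟩ : ∃ R', R < R' ∧ R' * M < 1 := by
    obtain ⟨R', hRR', hR'⟩ := exists_between ((lt_div_iff₀ (by positivity)).2 hRM)
    exact ⟨R', hRR', (lt_div_iff₀ (by positivity)).1 hR'⟩
  have gap : 0 < 1 - R' * M := sub_pos.2 hR'M
  have hR'1 : R' ≤ 1 := (le_mul_of_one_le_right (hR.trans hRR').le hM).trans hR'M.le
  refine le_of_forall_pos_le_add fun ε hε => ?_
  obtain ⟨D, P, K', hP, hPR', hK', hK'R', hK'K⟩ := hK.exists_trigPolynomial_near hR hRR' hα hαR hm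
    hKR f (mul_pos hε gap)
  obtain ⟨f', hf'⟩ : ∃ f', f' + K' f' = toL2 g := by
    obtain ⟨G, -, hG⟩ := exists_inverse_id_add (hK'R'.trans_lt hR'M)
    exact ⟨_, hG (toL2 g)⟩
  have f'_bound := hK'.re_inner_nonneg_of_trigPolynomial hP (fun x => (hPR' x).trans hR'1)
    (hK'R'.trans_lt hR'M) hmax hg hf'
  have error_bound : ‖f' - f‖ ≤ ε := by
    refine le_of_mul_le_mul_left ?_ gap
    rw [mul_comm _ ε]
    refine (mul_norm_le_norm_add_apply hK'R' _).trans (le_trans (le_of_eq ?_) hK'K)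
    rw [← norm_neg, map_sub K', sub_add_sub_comm, hf', ← hf, sub_apply]
    congr 1
    abel
  have := le_of_abs_le ((abs_re_inner_mFourierLp_zero_le _).trans error_bound)
  rw [inner_sub_right, Complex.sub_re] at this
  linarith

end Positivity

section Density

variable {d ι : Type*} [Fintype d] [Fintype ι] {α : UnitAddTorus d → EuclideanSpace ℝ ι}
  {m : (d → ℤ) → EuclideanSpace ℂ ι} {R M : ℝ} {K : TorusL2 d →L[ℂ] TorusL2 d}

lemma HasSymbol.add_apply_mFourierLp (hK : HasSymbol K α m) (k : d → ℤ) :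
    (mFourierLp 2 k + K (mFourierLp 2 k) : TorusL2 d) =ᵐ[volume]
      fun x => (1 + pairing (α x) (m k)) * mFourier k x := by
  filter_upwards [Lp.coeFn_add (mFourierLp 2 k) (K (mFourierLp 2 k)), hK k, coeFn_mFourierLp 2 k]
    with x hadd hx hk
  rw [hadd, Pi.add_apply, hx, hk, add_mul, one_mul]

lemma ae_re_conj_mul_nonneg {r : TorusL2 d}
    (h : ∀ g : C(UnitAddTorus d, ℂ), (∀ x, 0 ≤ (g x).re) → 0 ≤ (inner ℂ r (toL2 g)).re) {z : ℂ}
    (hz : 0 ≤ z.re) : ∀ᵐ x, 0 ≤ (conj (r x) * z).re := by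
  have hr : MemLp (fun x => conj (r x) * z) 2 := (Lp.memLp r).star.mul_const z
  refine ae_nonneg_of_forall_integral_mul_nonneg hr.re fun g hg => ?_
  refine (h (z • complexify g) fun x => ?_).trans_eq ?_
  · simpa [complexify] using mul_nonneg hz (hg x)
  · rw [inner_eq_integral, ← RCLike.re_eq_complex_re, ← integral_re]
    · refine integral_congr_ae ?_
      filter_upwards [ContinuousMap.coeFn_toLp (𝕜 := ℂ) (p := 2) volume (z • complexify g)]
        with x hx
      rw [hx]
      simp only [complexify, ContinuousMap.coe_smul, ContinuousMap.coe_mk, Pi.smul_apply,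
        smul_eq_mul, RCLike.re_eq_complex_re, ← Complex.re_mul_ofReal]
      congr 1
      ring
    · exact (Lp.memLp r).star.integrable_mul (Lp.memLp _)

theorem exists_density (hR : 0 < R) (hM : 1 ≤ M) (hRM : R * M < 1) (hα : AEStronglyMeasurable α)
    (hαR : ∀ᵐ x, ‖α x‖ ≤ R) (hm : ∀ k, ‖m k‖ ≤ M) (hmax : WeakMaximumPrinciple m) :
    ∃ ρ : UnitAddTorus d → ℝ, MemLp ρ 2 ∧ 0 ≤ᵐ[volume] ρ ∧
      ∀ k, ∫ x, (ρ x : ℂ) * ((1 + pairing (α x) (m k)) * mFourier k x) =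
        if k = 0 then 1 else 0 := by
  obtain ⟨K, hKR, hK⟩ := exists_hasSymbol hα hαR hm
  obtain ⟨G, hGl, hGr⟩ := exists_inverse_id_add (hKR.trans_lt hRM)
  set r := G.adjoint (mFourierLp 2 0)
  have inner_r (w) : inner ℂ r w = inner ℂ (mFourierLp 2 0) (G w) := G.adjoint_inner_left _ _
  have re_nonneg {z : ℂ} (hz : 0 ≤ z.re) : ∀ᵐ x, 0 ≤ (conj (r x) * z).re :=
    ae_re_conj_mul_nonneg (fun g hg => by
      rw [inner_r]
      exact hK.re_inner_nonneg hR hM hRM hα hαR hm hKR hmax hg (hGr _)) hz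
  have conj_r_eq : ∀ᵐ x, conj (r x) = ((r x).re : ℂ) := by
    filter_upwards [re_nonneg (z := Complex.I) (by simp), re_nonneg (z := -Complex.I) (by simp)]
      with x hI hI'
    refine Complex.ext (by simp) ?_
    exact le_antisymm (by simpa using hI) (by simpa using hI')
  refine ⟨fun x => (r x).re, (Lp.memLp r).re, ?_, fun k => ?_⟩
  · filter_upwards [re_nonneg (z := 1) (by simp)] with x hx
    simpa using hx
  · calc _ = ∫ x, conj (r x) * (mFourierLp 2 k + K (mFourierLp 2 k) : TorusL2 d) x := by
          refine integral_congr_ae ?_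
          filter_upwards [conj_r_eq, hK.add_apply_mFourierLp k] with x hx hk
          rw [hx, hk]
      _ = inner ℂ (mFourierLp 2 0) (mFourierLp 2 k) := by rw [← inner_eq_integral, inner_r, hGl]
      _ = if k = 0 then 1 else 0 := by
          rw [orthonormal_iff_ite.1 orthonormal_mFourier]
          simp only [eq_comm]

theorem ae_eq_zero_of_forall_integral_eq_zero (hRM : R * M < 1) (hα : AEStronglyMeasurable α)
    (hαR : ∀ᵐ x, ‖α x‖ ≤ R) (hm : ∀ k, ‖m k‖ ≤ M) {τ : UnitAddTorus d → ℂ} (hτ : MemLp τ 2)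
    (h : ∀ k, ∫ x, τ x * ((1 + pairing (α x) (m k)) * mFourier k x) = 0) : τ =ᵐ[volume] 0 := by
  obtain ⟨K, hKR, hK⟩ := exists_hasSymbol hα hαR hm
  obtain ⟨G, -, hG⟩ := exists_inverse_id_add (hKR.trans_lt hRM)
  set t := hτ.star.toLp
  have t_eq : t =ᵐ[volume] star τ := hτ.star.coeFn_toLp
  have inner_basis k : inner ℂ t (mFourierLp 2 k + K (mFourierLp 2 k)) = 0 := by
    rw [inner_eq_integral, ← h k]
    refine integral_congr_ae ?_
    filter_upwards [t_eq, hK.add_apply_mFourierLp k] with x hx hk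
    rw [hx, hk]
    simp
  have inner_range (f : TorusL2 d) : inner ℂ t (f + K f) = 0 := by
    refine denseRange_linearCombination_mFourierLp.induction_on
      (p := fun f => inner ℂ t (f + K f) = 0) f
      (isClosed_eq (by fun_prop) (by fun_prop)) fun c => ?_
    induction c using Finsupp.induction_linear with
    | zero => simp
    | add c c' hc hc' =>
      rw [map_add, map_add, add_add_add_comm, inner_add_right, hc, hc', add_zero]
    | single k a =>
      rw [Finsupp.linearCombination_single, map_smul, ← smul_add, inner_smul_right, inner_basis,
        mul_zero]
  have t_eq_zero : t = 0 := by simpa [hG] using inner_range (G t)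
  filter_upwards [t_eq, Lp.coeFn_zero ℂ 2 (volume : Measure (UnitAddTorus d))] with x hx hzero
  rw [t_eq_zero, hzero] at hx
  simpa using hx.symm

end Density

variable {n : ℕ}

section FundamentalDomain

/-- The projection `ℝⁿ → (ℝ/ℤ)ⁿ`. -/
def proj (x : Fin n → ℝ) : UnitAddTorus (Fin n) := fun i => (x i : UnitAddCircle)

/-- The representative in `(0,1]ⁿ` of a point of the torus. -/
def rep (t : UnitAddTorus (Fin n)) : Fin n → ℝ := (measurableEquivPiIoc (0 : Fin n → ℝ) t).1

lemma proj_rep (t : UnitAddTorus (Fin n)) : proj (rep t) = t :=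
  (measurableEquivPiIoc (0 : Fin n → ℝ)).symm_apply_apply t

lemma continuous_proj : Continuous (proj (n := n)) :=
  continuous_pi fun i => (AddCircle.continuous_mk' 1).comp (continuous_apply i)

lemma proj_add (x y : Fin n → ℝ) : proj (x + y) = proj x + proj y :=
  funext fun i => AddCircle.coe_add 1 (x i) (y i)

lemma isPeriodic_comp_proj {E : Type*} (f : UnitAddTorus (Fin n) → E) :
    IsPeriodic fun x => f (proj x) :=
  fun x k => congrArg f (funext fun i => by simp [proj])

lemma exists_rep_proj_eq_add (x : Fin n → ℝ) :
    ∃ k : Fin n → ℤ, rep (proj x) = x + fun i => (k i : ℝ) := by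
  have (i : Fin n) : ∃ k : ℤ, (k : ℝ) = rep (proj x) i - x i := by
    have coe_sub : ((rep (proj x) i - x i : ℝ) : UnitAddCircle) = 0 := by
      rw [AddCircle.coe_sub, sub_eq_zero]
      exact congrFun (proj_rep (proj x)) i
    simpa using (AddCircle.coe_eq_zero_iff 1).1 coe_sub
  choose k hk using this
  exact ⟨k, funext fun i => by rw [Pi.add_apply, hk]; ring⟩

lemma apply_rep_proj {E : Type*} {f : (Fin n → ℝ) → E} (hf : IsPeriodic f) (x : Fin n → ℝ) :
    f (rep (proj x)) = f x := by
  obtain ⟨k, hk⟩ := exists_rep_proj_eq_add x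
  rw [hk, hf]

lemma measurableSet_pi_Ioc : MeasurableSet
    {x : Fin n → ℝ | ∀ i, x i ∈ Set.Ioc ((0 : Fin n → ℝ) i) ((0 : Fin n → ℝ) i + 1)} :=
  MeasurableSet.univ_pi' fun _ => measurableSet_Ioc

lemma measurableEmbedding_rep : MeasurableEmbedding (rep (n := n)) :=
  (MeasurableEmbedding.subtype_coe measurableSet_pi_Ioc).comp
    (measurableEquivPiIoc (0 : Fin n → ℝ)).measurableEmbedding

lemma measurable_rep : Measurable (rep (n := n)) := measurableEmbedding_rep.measurable

lemma range_rep : Set.range (rep (n := n)) =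
    {x | ∀ i, x i ∈ Set.Ioc ((0 : Fin n → ℝ) i) ((0 : Fin n → ℝ) i + 1)} :=
  ((measurableEquivPiIoc (0 : Fin n → ℝ)).surjective.range_comp Subtype.val).trans
    Subtype.range_coe

lemma unitCell_ae_eq_range_rep : unitCell n =ᵐ[volume] Set.range (rep (n := n)) := by
  have range_eq : Set.range (rep (n := n)) = Set.univ.pi fun _ => Set.Ioc (0 : ℝ) 1 := by
    rw [range_rep]
    ext x
    simp
  rw [range_eq]
  exact (Measure.univ_pi_Ioo_ae_eq_Icc (μ := fun _ : Fin n => (volume : Measure ℝ))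
    (f := fun _ => 0) (g := fun _ => 1)).trans
    (Measure.univ_pi_Ioc_ae_eq_Icc (μ := fun _ : Fin n => (volume : Measure ℝ))
    (f := fun _ => 0) (g := fun _ => 1)).symm

lemma measurePreserving_rep :
    MeasurePreserving (rep (n := n)) volume (volume.restrict (unitCell n)) := by
  rw [Measure.restrict_congr_set unitCell_ae_eq_range_rep, range_rep,
    ← map_comap_subtype_coe measurableSet_pi_Ioc]
  exact (⟨measurable_subtype_coe, rfl⟩ : MeasurePreserving Subtype.val
    (Measure.comap Subtype.val volume) _).comp (measurePreserving_equivPiIoc 0)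

lemma integral_rep {E : Type*} [NormedAddCommGroup E] [NormedSpace ℝ E] (f : (Fin n → ℝ) → E) :
    ∫ t, f (rep t) = ∫ x in unitCell n, f x :=
  measurePreserving_rep.integral_comp measurableEmbedding_rep f

lemma ae_restrict_unitCell_iff {p : (Fin n → ℝ) → Prop} :
    (∀ᵐ x ∂volume.restrict (unitCell n), p x) ↔ ∀ᵐ t, p (rep t) := by
  rw [← measurePreserving_rep.map_eq, measurableEmbedding_rep.ae_map_iff]

lemma ae_rep {p : (Fin n → ℝ) → Prop} (h : ∀ᵐ x, p x) : ∀ᵐ t, p (rep t) :=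
  ae_restrict_unitCell_iff.1 (ae_restrict_of_ae h)

lemma ae_of_ae_rep {p : (Fin n → ℝ) → Prop} (hp : IsPeriodic p) (h : ∀ᵐ t, p (rep t)) :
    ∀ᵐ x, p x := by
  have ae_range : ∀ᵐ x, x ∈ Set.range (rep (n := n)) → p x := by
    rw [← ae_restrict_iff' measurableEmbedding_rep.measurableSet_range,
      ← Measure.restrict_congr_set unitCell_ae_eq_range_rep]
    exact ae_restrict_unitCell_iff.2 h
  have ae_translates : ∀ᵐ x : Fin n → ℝ, ∀ k : Fin n → ℤ,
      (x + fun i => (k i : ℝ)) ∈ Set.range (rep (n := n)) → p (x + fun i => (k i : ℝ)) :=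
    ae_all_iff.2 fun k => (measurePreserving_add_right volume
      (fun i => (k i : ℝ))).quasiMeasurePreserving.ae ae_range
  filter_upwards [ae_translates] with x hx
  obtain ⟨k, hk⟩ := exists_rep_proj_eq_add x
  rw [← hp x k]
  exact hx k ⟨proj x, hk⟩

lemma exists_norm_le_of_isPeriodic {E : Type*} [SeminormedAddGroup E] {f : (Fin n → ℝ) → E}
    (hf : Continuous f) (hper : IsPeriodic f) : ∃ C, ∀ x, ‖f x‖ ≤ C := by
  obtain ⟨C, hC⟩ := (isCompact_Icc (a := (0 : Fin n → ℝ)) (b := 1)).exists_bound_of_continuousOn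
    hf.continuousOn
  refine ⟨C, fun x => ?_⟩
  rw [← apply_rep_proj hper]
  have rep_mem := (measurableEquivPiIoc (0 : Fin n → ℝ) (proj x)).2
  exact hC _ ⟨fun i => (rep_mem i).1.le, fun i => (rep_mem i).2.trans_eq (by simp)⟩

section Integrals

variable {E : Type*} [NormedAddCommGroup E] {f : (Fin n → ℝ) → E}

lemma memLp_comp_rep [SecondCountableTopology E] (hf : Continuous f) (hper : IsPeriodic f)
    {p : ℝ≥0∞} : MemLp (fun t => f (rep t)) p := by
  obtain ⟨C, hC⟩ := exists_norm_le_of_isPeriodic hf hper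
  exact MemLp.of_bound (hf.stronglyMeasurable.comp_measurable measurable_rep).aestronglyMeasurable
    C (Eventually.of_forall fun t => hC _)

variable [NormedSpace ℝ E]

lemma integral_rep_add (hf : IsPeriodic f) (v : Fin n → ℝ) :
    ∫ t, f (rep t + v) = ∫ t, f (rep t) := by
  have shift (t) : f (rep t + v) = f (rep (t + proj v)) := by
    rw [← apply_rep_proj hf, proj_add, proj_rep]
  simp_rw [shift]
  exact integral_add_right_eq_self (fun t => f (rep t)) (proj v)

lemma isPeriodic_fderiv (hf : IsPeriodic f) : IsPeriodic (fderiv ℝ f) := by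
  intro x k
  rw [← fderiv_comp_add_right]
  exact congrArg (fderiv ℝ · x) (funext fun y => hf y k)

lemma integral_fderiv_line_eq_zero [CompleteSpace E] (hf : ContDiff ℝ 1 f) (hper : IsPeriodic f)
    (x : Fin n → ℝ) (i : Fin n) :
    ∫ s in (0 : ℝ)..1, fderiv ℝ f (x + s • Pi.single i 1) (Pi.single i 1) = 0 := by
  have single_eq : (Pi.single i 1 : Fin n → ℝ) = fun j => ((Pi.single i 1 : Fin n → ℤ) j : ℝ) := by
    ext j
    simp [Pi.single_apply]
  have hline (s : ℝ) : HasDerivAt (fun s : ℝ => x + s • (Pi.single i 1 : Fin n → ℝ))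
      (Pi.single i 1) s := by
    simpa using ((hasDerivAt_id s).smul_const (Pi.single i (1 : ℝ))).const_add x
  have : Continuous (fderiv ℝ f) := hf.continuous_fderiv one_ne_zero
  rw [intervalIntegral.integral_eq_sub_of_hasDerivAt (fun s _ =>
    (hf.differentiable one_ne_zero _).hasFDerivAt.comp_hasDerivAt s (hline s))
    (Continuous.intervalIntegrable (by fun_prop) _ _)]
  simp only [Function.comp_apply, one_smul, zero_smul, add_zero]
  rw [single_eq, hper, sub_self]

lemma integral_fderiv_rep_eq_zero [SecondCountableTopology E] [CompleteSpace E]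
    (hf : ContDiff ℝ 1 f) (hper : IsPeriodic f) (i : Fin n) :
    ∫ t, fderiv ℝ f (rep t) (Pi.single i 1) = 0 := by
  set f' : (Fin n → ℝ) → E := fun x => fderiv ℝ f x (Pi.single i 1)
  have f'_cont : Continuous f' := (hf.continuous_fderiv one_ne_zero).clm_apply continuous_const
  have f'_per : IsPeriodic f' := fun x k => by simp only [f', isPeriodic_fderiv hper x k]
  obtain ⟨C, hC⟩ := exists_norm_le_of_isPeriodic f'_cont f'_per
  calc ∫ t, f' (rep t)
      = ∫ s in (0 : ℝ)..1, ∫ t, f' (rep t + s • Pi.single i 1) := by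
        simp_rw [integral_rep_add f'_per]
        simp
    _ = ∫ t, ∫ s in (0 : ℝ)..1, f' (rep t + s • Pi.single i 1) := by
        refine intervalIntegral_integral_swap ?_
        rw [Set.uIoc_of_le zero_le_one]
        refine Integrable.of_bound (StronglyMeasurable.aestronglyMeasurable ?_) C
          (Eventually.of_forall fun _ => hC _)
        exact f'_cont.stronglyMeasurable.comp_measurable
          ((measurable_rep.comp measurable_snd).add (by fun_prop))
    _ = 0 := by simp [f', integral_fderiv_line_eq_zero hf hper]

end Integrals

end FundamentalDomain

section Jet

/-- The coefficients of the operator `M : D² + v · ∇` as a single vector, the pairs `(i, j)`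
indexing the second derivatives and the indices `j` the first ones. -/
def coeffVec (M : Matrix (Fin n) (Fin n) ℝ) (v : Fin n → ℝ) :
    EuclideanSpace ℝ ((Fin n × Fin n) ⊕ Fin n) :=
  WithLp.toLp 2 (Sum.elim (fun p => M p.1 p.2) v)

/-- The second and first derivatives of `φ` at `x`, arranged as in `coeffVec`. -/
def jet (φ : (Fin n → ℝ) → ℝ) (x : Fin n → ℝ) : EuclideanSpace ℝ ((Fin n × Fin n) ⊕ Fin n) :=
  coeffVec (hess φ x) (grad φ x)

lemma inner_coeffVec (M N : Matrix (Fin n) (Fin n) ℝ) (v w : Fin n → ℝ) :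
    inner ℝ (coeffVec M v) (coeffVec N w) = frobInner M N + dotc v w := by
  simp [coeffVec, PiLp.inner_apply, Fintype.sum_sum_type, Fintype.sum_prod_type, frobInner, dotc,
    mul_comm]

lemma norm_coeffVec_sq (M : Matrix (Fin n) (Fin n) ℝ) (v : Fin n → ℝ) :
    ‖coeffVec M v‖ ^ 2 = frobSq M + euclSq v := by
  rw [← real_inner_self_eq_norm_sq, inner_coeffVec]
  simp only [frobInner, dotc, frobSq, euclSq, sq]

lemma inner_laplacian_coeffVec (M : Matrix (Fin n) (Fin n) ℝ) (v : Fin n → ℝ) :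
    inner ℝ (coeffVec 1 0) (coeffVec M v) = M.trace := by
  simp [inner_coeffVec, frobInner, dotc, Matrix.one_apply, Matrix.trace]

end Jet

section MaximumPrinciple

lemma deriv_eq_zero_and_deriv_deriv_nonpos {f f' : ℝ → ℝ} {x f'' : ℝ}
    (hf : ∀ s, HasDerivAt f (f' s) s) (hf' : HasDerivAt f' f'' x) (hmax : ∀ s, f s ≤ f x) :
    f' x = 0 ∧ f'' ≤ 0 := by
  have deriv_eq : deriv f = f' := funext fun s => (hf s).deriv
  have critical : f' x = 0 := by
    rw [← deriv_eq]
    exact IsLocalMax.deriv_eq_zero (Eventually.of_forall hmax)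
  refine ⟨critical, not_lt.1 fun hpos => hpos.ne' ?_⟩
  have hmin : IsLocalMin f x := isLocalMin_of_deriv_deriv_pos
    (by rwa [deriv_eq, hf'.deriv]) (by rw [deriv_eq, critical]) (hf x).continuousAt
  have eventually_const : f =ᶠ[𝓝 x] fun _ => f x := hmin.mono fun s hs => (hmax s).antisymm hs
  rw [← hf'.deriv, ← deriv_eq, eventually_const.deriv.deriv_eq, deriv_const', deriv_const]

lemma fderiv_eq_zero_and_fderiv_fderiv_nonpos {E : Type*} [NormedAddCommGroup E]
    [NormedSpace ℝ E] {φ : E → ℝ} (hφ : ContDiff ℝ 2 φ) {x : E} (hmax : ∀ y, φ y ≤ φ x) (v : E) :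
    fderiv ℝ φ x v = 0 ∧ fderiv ℝ (fderiv ℝ φ) x v v ≤ 0 := by
  have hline (s : ℝ) : HasDerivAt (fun s : ℝ => x + s • v) v s := by
    simpa using ((hasDerivAt_id s).smul_const v).const_add x
  have hφ' : ContDiff ℝ 1 (fderiv ℝ φ) := hφ.fderiv_right (by norm_num)
  have first (s : ℝ) : HasDerivAt (fun s : ℝ => φ (x + s • v)) (fderiv ℝ φ (x + s • v) v) s :=
    (hφ.differentiable two_ne_zero _).hasFDerivAt.comp_hasDerivAt s (hline s)
  have second (s : ℝ) : HasDerivAt (fun s : ℝ => fderiv ℝ φ (x + s • v) v)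
      (fderiv ℝ (fderiv ℝ φ) (x + s • v) v v) s :=
    ((hφ'.differentiable one_ne_zero _).hasFDerivAt.comp_hasDerivAt s (hline s)).clm_apply
      (hasDerivAt_const s v) |>.congr_deriv (by simp)
  simpa using deriv_eq_zero_and_deriv_deriv_nonpos first (second 0) (by simpa using fun s => hmax _)

lemma hess_apply {φ : (Fin n → ℝ) → ℝ} (hφ : ContDiff ℝ 2 φ) (x : Fin n → ℝ) (i j : Fin n) :
    hess φ x i j = fderiv ℝ (fderiv ℝ φ) x (Pi.single i 1) (Pi.single j 1) := by
  have hφ' : ContDiff ℝ 1 (fderiv ℝ φ) := hφ.fderiv_right (by norm_num)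
  change fderiv ℝ (fun y => fderiv ℝ φ y (Pi.single j 1)) x (Pi.single i 1) = _
  rw [fderiv_clm_apply (hφ'.differentiable one_ne_zero x) (differentiableAt_const _)]
  simp

lemma dotProduct_hess_mulVec {φ : (Fin n → ℝ) → ℝ} (hφ : ContDiff ℝ 2 φ) (x ξ : Fin n → ℝ) :
    ξ ⬝ᵥ (hess φ x).mulVec ξ = fderiv ℝ (fderiv ℝ φ) x ξ ξ := by
  have basis_expansion : ξ = ∑ i, ξ i • Pi.single i 1 := pi_eq_sum_univ' ξ
  conv_rhs => rw [basis_expansion]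
  simp only [map_sum, map_smul, sum_apply, smul_apply, smul_eq_mul, dotProduct, Matrix.mulVec,
    hess_apply hφ, Finset.mul_sum]
  rw [Finset.sum_comm]
  exact Finset.sum_congr rfl fun i _ => Finset.sum_congr rfl fun j _ => by ring

lemma posSemidef_neg_hess {φ : (Fin n → ℝ) → ℝ} (hφ : ContDiff ℝ 2 φ) {x : Fin n → ℝ}
    (hmax : ∀ y, φ y ≤ φ x) : (-hess φ x).PosSemidef := by
  refine .of_dotProduct_mulVec_nonneg (Matrix.IsHermitian.ext fun i j => ?_) fun ξ => ?_
  · have hsymm : IsSymmSndFDerivAt ℝ φ x := hφ.contDiffAt.isSymmSndFDerivAt (by simp)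
    simp [hess_apply hφ, hsymm (Pi.single i 1)]
  · rw [star_trivial, Matrix.neg_mulVec, dotProduct_neg, dotProduct_hess_mulVec hφ, neg_nonneg]
    exact (fderiv_eq_zero_and_fderiv_fderiv_nonpos hφ hmax ξ).2

lemma frobSq_le_trace_sq {N : Matrix (Fin n) (Fin n) ℝ} (hN : N.PosSemidef) :
    frobSq N ≤ N.trace ^ 2 := by
  have minor_nonneg (i j) : N i j ^ 2 ≤ N i i * N j j := by
    have := (hN.submatrix ![i, j]).det_nonneg
    have symm : N j i = N i j := hN.isHermitian.apply i j
    simp only [Matrix.det_fin_two, Matrix.submatrix_apply, Matrix.cons_val_zero,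
      Matrix.cons_val_one, symm] at this
    linarith
  rw [sq, Matrix.trace, Finset.sum_mul_sum]
  exact Finset.sum_le_sum fun i _ => Finset.sum_le_sum fun j _ => minor_nonneg i j

lemma inner_laplacian_add_jet_nonpos {φ : (Fin n → ℝ) → ℝ} (hφ : ContDiff ℝ 2 φ)
    {x : Fin n → ℝ} (hmax : ∀ y, φ y ≤ φ x) {a : EuclideanSpace ℝ ((Fin n × Fin n) ⊕ Fin n)}
    (ha : ‖a‖ ≤ 1) : inner ℝ (coeffVec 1 0 + a) (jet φ x) ≤ 0 := by
  have grad_eq_zero : grad φ x = 0 :=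
    funext fun i => (fderiv_eq_zero_and_fderiv_fderiv_nonpos hφ hmax (Pi.single i 1)).1
  have hneg := posSemidef_neg_hess hφ hmax
  have trace_nonneg : 0 ≤ -(hess φ x).trace := by
    rw [← Matrix.trace_neg]
    exact hneg.trace_nonneg
  have norm_jet_le : ‖jet φ x‖ ≤ -(hess φ x).trace := by
    refine (sq_le_sq₀ (norm_nonneg _) trace_nonneg).1 ?_
    have := frobSq_le_trace_sq hneg
    rw [jet, norm_coeffVec_sq, grad_eq_zero]
    simpa [frobSq, euclSq] using this
  calc inner ℝ (coeffVec 1 0 + a) (jet φ x)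
      = (hess φ x).trace + inner ℝ a (jet φ x) := by
        rw [inner_add_left, jet, inner_laplacian_coeffVec]
    _ ≤ (hess φ x).trace + ‖a‖ * ‖jet φ x‖ := by gcongr; exact real_inner_le_norm _ _
    _ ≤ (hess φ x).trace + 1 * ‖jet φ x‖ := by gcongr
    _ ≤ 0 := by linarith

end MaximumPrinciple

section Symbols

/-- The Fourier symbols of the second and first partial derivatives, arranged as in `coeffVec`. -/
def derivSymbol (k : Fin n → ℤ) : EuclideanSpace ℂ ((Fin n × Fin n) ⊕ Fin n) :=
  WithLp.toLp 2 (Sum.elim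
    (fun p => (2 * Real.pi * Complex.I * k p.1) * (2 * Real.pi * Complex.I * k p.2))
    fun j => 2 * Real.pi * Complex.I * k j)

/-- The Fourier symbol of the Laplacian. -/
def laplacianSymbol (k : Fin n → ℤ) : ℝ := -(4 * Real.pi ^ 2 * ∑ i, (k i : ℝ) ^ 2)

/-- The Fourier multipliers of `∂ᵢ∂ⱼΔ⁻¹` and `∂ⱼΔ⁻¹`; they vanish at the zero frequency because
`0⁻¹ = 0`. -/
def rieszSymbol (k : Fin n → ℤ) : EuclideanSpace ℂ ((Fin n × Fin n) ⊕ Fin n) :=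
  (laplacianSymbol k : ℂ)⁻¹ • derivSymbol k

lemma pairing_add_left {ι : Type*} [Fintype ι] (a b : EuclideanSpace ℝ ι)
    (z : EuclideanSpace ℂ ι) : pairing (a + b) z = pairing a z + pairing b z := by
  simp [pairing, add_mul, Finset.sum_add_distrib]

lemma pairing_smul_left {ι : Type*} [Fintype ι] (r : ℝ) (a : EuclideanSpace ℝ ι)
    (z : EuclideanSpace ℂ ι) : pairing (r • a) z = r * pairing a z := by
  simp [pairing, Finset.mul_sum, mul_assoc]

lemma pairing_smul_right {ι : Type*} [Fintype ι] (r : ℂ) (a : EuclideanSpace ℝ ι)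
    (z : EuclideanSpace ℂ ι) : pairing a (r • z) = r * pairing a z := by
  simp [pairing, Finset.mul_sum, mul_left_comm]

lemma derivSymbol_zero : derivSymbol (0 : Fin n → ℤ) = 0 := by
  ext (p | j) <;> simp [derivSymbol]

lemma one_le_sum_sq {k : Fin n → ℤ} (hk : k ≠ 0) : (1 : ℝ) ≤ ∑ i, (k i : ℝ) ^ 2 := by
  obtain ⟨i, hi⟩ := Function.ne_iff.1 hk
  have one_le_sq : 1 ≤ k i ^ 2 := Order.one_le_iff_pos.2 (sq_pos_of_ne_zero hi)
  have one_le_sum : 1 ≤ ∑ i, k i ^ 2 := one_le_sq.trans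
    (Finset.single_le_sum (f := fun i => k i ^ 2) (fun _ _ => sq_nonneg _) (Finset.mem_univ i))
  exact_mod_cast one_le_sum

lemma laplacianSymbol_ne_zero {k : Fin n → ℤ} (hk : k ≠ 0) : laplacianSymbol k ≠ 0 := by
  have := one_le_sum_sq hk
  exact neg_ne_zero.2 (by positivity)

lemma pairing_laplacian (k : Fin n → ℤ) :
    pairing (coeffVec 1 0) (derivSymbol k) = laplacianSymbol k := by
  simp only [pairing, coeffVec, derivSymbol, laplacianSymbol, Fintype.sum_sum_type,
    Fintype.sum_prod_type, Sum.elim_inl, Sum.elim_inr, Matrix.one_apply, Pi.zero_apply]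
  push_cast
  simp only [apply_ite Complex.ofReal, Complex.ofReal_one, Complex.ofReal_zero, ite_mul, one_mul,
    zero_mul, Finset.sum_ite_eq, Finset.mem_univ, if_true, Finset.sum_const_zero, add_zero,
    Finset.mul_sum, ← Finset.sum_neg_distrib]
  exact Finset.sum_congr rfl fun i _ => by linear_combination 4 * Real.pi ^ 2 * (k i : ℂ) ^ 2 *
    Complex.I_sq

lemma laplacianSymbol_mul_one_add_pairing (a : EuclideanSpace ℝ ((Fin n × Fin n) ⊕ Fin n))
    {k : Fin n → ℤ} (hk : k ≠ 0) :
    laplacianSymbol k * (1 + pairing a (rieszSymbol k)) =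
      pairing (coeffVec 1 0 + a) (derivSymbol k) := by
  have : (laplacianSymbol k : ℂ) ≠ 0 := by exact_mod_cast laplacianSymbol_ne_zero hk
  rw [rieszSymbol, pairing_smul_right, pairing_add_left, pairing_laplacian, mul_add, mul_one,
    mul_inv_cancel_left₀ this]

lemma norm_derivSymbol_sq (k : Fin n → ℤ) :
    ‖derivSymbol k‖ ^ 2 = laplacianSymbol k ^ 2 - laplacianSymbol k := by
  have norm_sq_first (j : Fin n) : ‖2 * Real.pi * Complex.I * (k j : ℂ)‖ ^ 2 =
      4 * Real.pi ^ 2 * (k j : ℝ) ^ 2 := by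
    simp only [norm_mul, Complex.norm_ofNat, Complex.norm_real, Real.norm_eq_abs, Complex.norm_I,
      Complex.norm_intCast, mul_pow, sq_abs]
    ring
  rw [EuclideanSpace.norm_sq_eq, Fintype.sum_sum_type, Fintype.sum_prod_type]
  simp only [derivSymbol, Sum.elim_inl, Sum.elim_inr,
    norm_mul (_ * _ * _ : ℂ) (_ * _ * _), mul_pow ‖_‖ ‖_‖, norm_sq_first]
  simp only [laplacianSymbol, ← Finset.mul_sum, ← Finset.sum_mul]
  ring

lemma norm_rieszSymbol_le (k : Fin n → ℤ) :
    ‖rieszSymbol k‖ ≤ √(1 + 1 / (4 * Real.pi ^ 2)) := by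
  rcases eq_or_ne k 0 with rfl | hk
  · rw [rieszSymbol, derivSymbol_zero, smul_zero, norm_zero]
    positivity
  refine Real.le_sqrt_of_sq_le ?_
  have hsum := one_le_sum_sq hk
  have hlap := laplacianSymbol_ne_zero hk
  calc ‖rieszSymbol k‖ ^ 2 = 1 + 1 / (-laplacianSymbol k) := by
        rw [rieszSymbol, norm_smul, mul_pow, norm_derivSymbol_sq, norm_inv, Complex.norm_real,
          inv_pow, Real.norm_eq_abs, sq_abs]
        field_simp
        ring
    _ ≤ 1 + 1 / (4 * Real.pi ^ 2) := by
        rw [laplacianSymbol, neg_neg]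
        gcongr 1 + ?_
        exact one_div_le_one_div_of_le (by positivity)
          (le_mul_of_one_le_right (by positivity) hsum)

end Symbols

section TestFunctions

/-- The real part of a trigonometric polynomial, as a periodic function on `ℝⁿ`. -/
def trigFun (s : Finset (Fin n → ℤ)) (q : (Fin n → ℤ) → ℂ) (x : Fin n → ℝ) : ℝ :=
  (∑ k ∈ s, q k * mFourier k (proj x)).re

variable {s : Finset (Fin n → ℤ)} {q : (Fin n → ℤ) → ℂ}

lemma mFourier_proj (k : Fin n → ℤ) (x : Fin n → ℝ) :
    mFourier k (proj x) = Complex.exp (2 * Real.pi * Complex.I * ∑ i, (k i : ℂ) * x i) := by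
  simp only [mFourier, ContinuousMap.coe_mk, proj, fourier_coe_apply, Finset.mul_sum,
    Complex.exp_sum]
  refine Finset.prod_congr rfl fun i _ => congrArg Complex.exp ?_
  push_cast
  ring

lemma contDiff_mFourier_proj (k : Fin n → ℤ) {p : WithTop ℕ∞} :
    ContDiff ℝ p fun x => mFourier k (proj x) := by
  simp_rw [mFourier_proj]
  refine ContDiff.cexp (contDiff_const.mul (ContDiff.sum fun i _ => contDiff_const.mul ?_))
  exact Complex.ofRealCLM.contDiff.comp (contDiff_apply ℝ ℝ i)

lemma fderiv_mFourier_proj (k : Fin n → ℤ) (x : Fin n → ℝ) (i : Fin n) :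
    fderiv ℝ (fun x => mFourier k (proj x)) x (Pi.single i 1) =
      2 * Real.pi * Complex.I * k i * mFourier k (proj x) := by
  set L : (Fin n → ℝ) →L[ℝ] ℂ := (2 * Real.pi * Complex.I : ℂ) • ∑ j, (k j : ℂ) •
    Complex.ofRealCLM.comp (ContinuousLinearMap.proj (R := ℝ) (φ := fun _ : Fin n => ℝ) j)
  have mFourier_eq : (fun x => mFourier k (proj x)) = fun x => Complex.exp (L x) := by
    ext x
    simp [mFourier_proj, L]
  rw [congrFun mFourier_eq x, mFourier_eq, L.hasFDerivAt.cexp.fderiv]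
  simp only [L, smul_apply, sum_apply, ContinuousLinearMap.comp_apply,
    ContinuousLinearMap.proj_apply, Complex.ofRealCLM_apply, smul_eq_mul, Pi.single_apply,
    apply_ite Complex.ofReal, Complex.ofReal_one, Complex.ofReal_zero, mul_ite, mul_one, mul_zero,
    Finset.sum_ite_eq', Finset.mem_univ, if_true]
  ring

lemma contDiff_trigFun {p : WithTop ℕ∞} : ContDiff ℝ p (trigFun s q) :=
  Complex.reCLM.contDiff.comp
    (ContDiff.sum fun k _ => contDiff_const.mul (contDiff_mFourier_proj k))

lemma isPeriodic_trigFun : IsPeriodic (trigFun s q) :=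
  isPeriodic_comp_proj fun t => (∑ k ∈ s, q k * mFourier k t).re

lemma pd_trigFun (i : Fin n) :
    pd (trigFun s q) i = trigFun s fun k => q k * (2 * Real.pi * Complex.I * k i) := by
  ext x
  have differentiable (k : Fin n → ℤ) : DifferentiableAt ℝ (fun x => mFourier k (proj x)) x :=
    (contDiff_mFourier_proj k (p := 1)).differentiable one_ne_zero x
  have hderiv : HasFDerivAt (trigFun s q) _ x := Complex.reCLM.hasFDerivAt.comp x
    (HasFDerivAt.fun_sum fun k _ => (differentiable k).hasFDerivAt.const_mul (q k))
  rw [pd, hderiv.fderiv]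
  simp only [ContinuousLinearMap.comp_apply, sum_apply, smul_apply, fderiv_mFourier_proj,
    Complex.reCLM_apply, trigFun, smul_eq_mul, mul_assoc]

lemma jet_trigFun (x : Fin n → ℝ) (i : (Fin n × Fin n) ⊕ Fin n) :
    jet (trigFun s q) x i = (∑ k ∈ s, q k * derivSymbol k i * mFourier k (proj x)).re := by
  rcases i with ⟨i, j⟩ | j
  · simp [jet, coeffVec, hess, pd_trigFun, trigFun, derivSymbol, mul_assoc, mul_left_comm, mul_comm]
  · simp [jet, coeffVec, grad, pd_trigFun, trigFun, derivSymbol]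

lemma inner_jet_trigFun (a : EuclideanSpace ℝ ((Fin n × Fin n) ⊕ Fin n)) (x : Fin n → ℝ) :
    inner ℝ a (jet (trigFun s q) x) =
      (∑ k ∈ s, q k * pairing a (derivSymbol k) * mFourier k (proj x)).re := by
  simp only [PiLp.inner_apply, jet_trigFun, Real.inner_apply, ← Complex.re_ofReal_mul,
    ← Complex.re_sum, pairing, Finset.mul_sum, Finset.sum_mul]
  rw [Finset.sum_comm]
  refine congrArg Complex.re (Finset.sum_congr rfl fun k _ => Finset.sum_congr rfl fun i _ => ?_)
  ring

theorem weakMaximumPrinciple_rieszSymbol : WeakMaximumPrinciple (rieszSymbol (n := n)) := by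
  intro s hs c
  set φ := trigFun s fun k => c k / laplacianSymbol k
  obtain ⟨t, -, ht⟩ := isCompact_univ.exists_isMaxOn Set.univ_nonempty
    (f := fun t => (∑ k ∈ s, c k / laplacianSymbol k * mFourier k t).re) (by fun_prop)
  refine ⟨t, fun a ha => ?_⟩
  have hmax (y) : φ y ≤ φ (rep t) := by
    simpa only [φ, trigFun, proj_rep, Set.mem_ofPred_eq] using ht (Set.mem_univ (proj y))
  have term_eq (k : Fin n → ℤ) : c k * ((1 + pairing a (rieszSymbol k)) * mFourier k t) =
      (if k = 0 then c 0 else 0) + c k / laplacianSymbol k *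
        pairing (coeffVec 1 0 + a) (derivSymbol k) * mFourier k t := by
    rcases eq_or_ne k 0 with rfl | hk
    · simp [rieszSymbol, derivSymbol_zero, pairing, mFourier_zero]
    · have : (laplacianSymbol k : ℂ) ≠ 0 := by exact_mod_cast laplacianSymbol_ne_zero hk
      rw [if_neg hk, ← laplacianSymbol_mul_one_add_pairing a hk]
      field_simp
      ring
  have jet_nonpos := inner_laplacian_add_jet_nonpos contDiff_trigFun hmax ha
  rw [inner_jet_trigFun, proj_rep] at jet_nonpos
  simp only [term_eq, Finset.sum_add_distrib, Finset.sum_ite_eq', if_pos hs, Complex.add_re]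
  linarith

end TestFunctions

section FourierCoefficients

lemma hasSum_integral_mul_mFourierCoeff {u v : UnitAddTorus (Fin n) → ℂ} (hu : MemLp u 2)
    (hv : MemLp v 2) :
    HasSum (fun k => (∫ t, u t * mFourier k t) * mFourierCoeff v k) (∫ t, u t * v t) := by
  have coeff_star k : conj (mFourierCoeff hu.star.toLp k) = ∫ t, u t * mFourier k t := by
    rw [mFourierCoeff, ← integral_conj]
    refine integral_congr_ae ?_
    filter_upwards [hu.star.coeFn_toLp] with t ht
    rw [ht, smul_eq_mul, map_mul, Pi.star_apply, RCLike.star_def, Complex.conj_conj, mFourier_neg,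
      Complex.conj_conj, mul_comm]
  have coeff_toLp k : mFourierCoeff hv.toLp k = mFourierCoeff v k := by
    refine integral_congr_ae ?_
    filter_upwards [hv.coeFn_toLp] with t ht
    rw [ht]
  have integral_toLp : ∫ t, conj ((hu.star.toLp : TorusL2 (Fin n)) t) *
      (hv.toLp : TorusL2 (Fin n)) t = ∫ t, u t * v t := by
    refine integral_congr_ae ?_
    filter_upwards [hu.star.coeFn_toLp, hv.coeFn_toLp] with t htu htv
    rw [htu, htv, Pi.star_apply, RCLike.star_def, Complex.conj_conj]
  simpa only [coeff_star, coeff_toLp, integral_toLp] using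
    hasSum_prod_mFourierCoeff hu.star.toLp hv.toLp

variable {f φ : (Fin n → ℝ) → ℝ}

lemma isPeriodic_pd (hf : IsPeriodic f) (i : Fin n) : IsPeriodic (pd f i) :=
  fun x k => congrArg (· (Pi.single i 1)) (isPeriodic_fderiv hf x k)

lemma contDiff_pd {p q : WithTop ℕ∞} (hf : ContDiff ℝ p f) (hpq : q + 1 ≤ p) (i : Fin n) :
    ContDiff ℝ q (pd f i) :=
  (hf.fderiv_right hpq).clm_apply contDiff_const

lemma mFourierCoeff_pd (hf : ContDiff ℝ 1 f) (hper : IsPeriodic f) (i : Fin n) (k : Fin n → ℤ) :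
    mFourierCoeff (fun t => (pd f i (rep t) : ℂ)) k =
      2 * Real.pi * Complex.I * k i * mFourierCoeff (fun t => (f (rep t) : ℂ)) k := by
  set e : (Fin n → ℝ) → ℂ := fun x => mFourier (-k) (proj x)
  have e_smooth : ContDiff ℝ 1 e := contDiff_mFourier_proj (-k)
  have f_smooth : ContDiff ℝ 1 fun x => (f x : ℂ) := Complex.ofRealCLM.contDiff.comp hf
  have ef_periodic : IsPeriodic fun x => e x * f x := fun x l => by
    simp only [hper x l, e, isPeriodic_comp_proj (mFourier (-k)) x l]
  have integrable_rep {g : (Fin n → ℝ) → ℝ} (hg : Continuous g) (hgper : IsPeriodic g) :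
      Integrable fun t => mFourier (-k) t * (g (rep t) : ℂ) := by
    refine memLp_one_iff_integrable.1 (memLp_comp_rep (f := fun x => e x * g x)
      (e_smooth.continuous.mul (Complex.continuous_ofReal.comp hg)) ?_) |>.congr ?_
    · exact fun x l => by simp only [hgper x l, e, isPeriodic_comp_proj (mFourier (-k)) x l]
    · simp [e, proj_rep]
  have product_rule (x) : fderiv ℝ (fun x => e x * f x) x (Pi.single i 1) =
      e x * pd f i x - 2 * Real.pi * Complex.I * k i * (e x * f x) := by
    have f_deriv : HasFDerivAt (fun x => (f x : ℂ)) (Complex.ofRealCLM.comp (fderiv ℝ f x)) x :=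
      Complex.ofRealCLM.hasFDerivAt.comp x (hf.differentiable one_ne_zero x).hasFDerivAt
    have e_deriv := (e_smooth.differentiable one_ne_zero x).hasFDerivAt
    rw [(e_deriv.fun_mul f_deriv).fderiv]
    simp only [e, pd, add_apply, smul_apply, ContinuousLinearMap.comp_apply,
      Complex.ofRealCLM_apply, smul_eq_mul, fderiv_mFourier_proj, Pi.neg_apply, Int.cast_neg,
      mul_neg, neg_mul]
    ring
  have integral_zero := integral_fderiv_rep_eq_zero (e_smooth.mul f_smooth) ef_periodic i
  simp only [product_rule, e, proj_rep] at integral_zero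
  have pd_cont : Continuous (pd f i) := (contDiff_pd hf (zero_add 1).le i).continuous
  rw [integral_sub (integrable_rep pd_cont (isPeriodic_pd hper i))
    ((integrable_rep hf.continuous hper).const_mul _), integral_const_mul] at integral_zero
  exact sub_eq_zero.1 integral_zero

lemma isPeriodic_jet (hφ : IsPeriodic φ) : IsPeriodic (jet φ) := by
  intro x k
  ext (⟨i, j⟩ | j)
  · exact isPeriodic_pd (isPeriodic_pd hφ j) i x k
  · exact isPeriodic_pd hφ j x k

lemma continuous_jet_apply (hφ : ContDiff ℝ 2 φ) (i : (Fin n × Fin n) ⊕ Fin n) :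
    Continuous fun x => jet φ x i := by
  rcases i with ⟨i, j⟩ | j
  · exact (contDiff_pd (contDiff_pd hφ one_add_one_eq_two.le j) (zero_add 1).le i).continuous
  · exact (contDiff_pd hφ one_add_one_eq_two.le j).continuous

lemma mFourierCoeff_jet (hφ : ContDiff ℝ 2 φ) (hper : IsPeriodic φ)
    (i : (Fin n × Fin n) ⊕ Fin n) (k : Fin n → ℤ) :
    mFourierCoeff (fun t => (jet φ (rep t) i : ℂ)) k =
      derivSymbol k i * mFourierCoeff (fun t => (φ (rep t) : ℂ)) k := by
  have hφ' (j) : ContDiff ℝ 1 (pd φ j) := contDiff_pd hφ one_add_one_eq_two.le j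
  have first (j) := mFourierCoeff_pd (hφ.of_le one_le_two) hper j k
  rcases i with ⟨i, j⟩ | j
  · refine (mFourierCoeff_pd (hφ' j) (isPeriodic_pd hper j) i k).trans ?_
    rw [first, ← mul_assoc]
    rfl
  · exact first j

end FourierCoefficients

section Duality

variable {a : UnitAddTorus (Fin n) → EuclideanSpace ℝ ((Fin n × Fin n) ⊕ Fin n)}

theorem integral_inner_jet_eq_zero (ha : MemLp a 2)
    (h : ∀ k, ∫ t, pairing (a t) (derivSymbol k) * mFourier k t = 0) {φ : (Fin n → ℝ) → ℝ}
    (hφ : ContDiff ℝ 2 φ) (hper : IsPeriodic φ) : ∫ t, inner ℝ (a t) (jet φ (rep t)) = 0 := by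
  have memLp_coeff i : MemLp (fun t => (a t i : ℂ)) 2 :=
    (Complex.ofRealCLM.comp (EuclideanSpace.proj i)).comp_memLp' ha
  have memLp_jet i : MemLp (fun t => (jet φ (rep t) i : ℂ)) 2 :=
    memLp_comp_rep (Complex.continuous_ofReal.comp (continuous_jet_apply hφ i))
      fun x k => by rw [Function.comp_apply, isPeriodic_jet hper x k, Function.comp_apply]
  have integrable_coeff_mul i k : Integrable fun t => (a t i : ℂ) * mFourier k t :=
    ((memLp_coeff i).integrable one_le_two).mul_bdd (by fun_prop)
      (Eventually.of_forall fun t => (norm_mFourier_apply k t).le)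
  have parseval := hasSum_sum fun i (_ : i ∈ Finset.univ) =>
    hasSum_integral_mul_mFourierCoeff (memLp_coeff i) (memLp_jet i)
  have summand_eq_zero k : ∑ i, (∫ t, (a t i : ℂ) * mFourier k t) *
      mFourierCoeff (fun t => (jet φ (rep t) i : ℂ)) k = 0 := by
    calc _ = (∫ t, pairing (a t) (derivSymbol k) * mFourier k t) *
          mFourierCoeff (fun t => (φ (rep t) : ℂ)) k := by
          simp_rw [mFourierCoeff_jet hφ hper, ← mul_assoc, ← Finset.sum_mul, pairing,
            Finset.sum_mul, mul_right_comm _ _ (mFourier k _)]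
          rw [integral_finsetSum _ fun i _ => (integrable_coeff_mul i k).mul_const _]
          simp_rw [integral_mul_const, Finset.sum_mul]
      _ = 0 := by rw [h, zero_mul]
  simp only [summand_eq_zero] at parseval
  refine Complex.ofReal_eq_zero.1 ?_
  calc _ = ∫ t, ∑ i, (a t i : ℂ) * (jet φ (rep t) i : ℂ) := by
        rw [← integral_complex_ofReal]
        simp [PiLp.inner_apply, mul_comm]
    _ = ∑ i, ∫ t, (a t i : ℂ) * (jet φ (rep t) i : ℂ) :=
        integral_finsetSum _ fun i _ => (memLp_coeff i).integrable_mul (memLp_jet i)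
    _ = 0 := parseval.unique hasSum_zero

theorem integral_pairing_derivSymbol_eq_zero (ha : MemLp a 2)
    (h : ∀ φ, ContDiff ℝ 2 φ → IsPeriodic φ → ∫ t, inner ℝ (a t) (jet φ (rep t)) = 0)
    (k : Fin n → ℤ) : ∫ t, pairing (a t) (derivSymbol k) * mFourier k t = 0 := by
  have integrable := (memLp_pairing_mul_mFourier ha (derivSymbol k) k).integrable one_le_two
  have re_mul_eq_zero (z : ℂ) : (z * ∫ t, pairing (a t) (derivSymbol k) * mFourier k t).re = 0 := by
    rw [← integral_const_mul, ← RCLike.re_eq_complex_re, ← integral_re (integrable.const_mul z),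
      ← h (trigFun {k} fun _ => z) contDiff_trigFun isPeriodic_trigFun]
    simp only [inner_jet_trigFun, Finset.sum_singleton, proj_rep, mul_assoc,
      RCLike.re_eq_complex_re]
  exact Complex.ext (by simpa using re_mul_eq_zero 1) (by simpa using re_mul_eq_zero (-Complex.I))

end Duality

section PerturbedLaplacian

/-- `σ` is a very weak solution on the torus of the equation adjoint to the operator whose
coefficients are the components of `β`, arranged as in `coeffVec`. -/
def IsWeakSolution (β : UnitAddTorus (Fin n) → EuclideanSpace ℝ ((Fin n × Fin n) ⊕ Fin n))
    (σ : UnitAddTorus (Fin n) → ℝ) : Prop :=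
  ∀ φ : (Fin n → ℝ) → ℝ, ContDiff ℝ 2 φ → IsPeriodic φ →
    ∫ t, σ t * inner ℝ (β t) (jet φ (rep t)) = 0

variable {β : UnitAddTorus (Fin n) → EuclideanSpace ℝ ((Fin n × Fin n) ⊕ Fin n)}
  {σ : UnitAddTorus (Fin n) → ℝ} {R : ℝ}

lemma isWeakSolution_iff (hβ : MemLp β ∞) (hσ : MemLp σ 2) : IsWeakSolution β σ ↔
    ∀ k ≠ 0, ∫ t, (σ t : ℂ) *
      ((1 + pairing (β t - coeffVec 1 0) (rieszSymbol k)) * mFourier k t) = 0 := by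
  have hσβ : MemLp (fun t => σ t • β t) 2 := hβ.smul hσ
  have fourier : IsWeakSolution β σ ↔
      ∀ k, ∫ t, pairing (σ t • β t) (derivSymbol k) * mFourier k t = 0 := by
    simp only [IsWeakSolution, ← real_inner_smul_left]
    exact ⟨integral_pairing_derivSymbol_eq_zero hσβ,
      fun h φ hφ hper => integral_inner_jet_eq_zero hσβ h hφ hper⟩
  have integral_eq {k : Fin n → ℤ} (hk : k ≠ 0) :
      ∫ t, pairing (σ t • β t) (derivSymbol k) * mFourier k t = laplacianSymbol k *
        ∫ t, (σ t : ℂ) * ((1 + pairing (β t - coeffVec 1 0) (rieszSymbol k)) * mFourier k t) := by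
    rw [← integral_const_mul]
    refine integral_congr_ae (Eventually.of_forall fun t => ?_)
    simp only
    rw [pairing_smul_left, ← add_sub_cancel (coeffVec 1 0) (β t),
      ← laplacianSymbol_mul_one_add_pairing _ hk, add_sub_cancel]
    ring
  rw [fourier]
  refine forall_congr' fun k => ?_
  rcases eq_or_ne k 0 with rfl | hk
  · simp [derivSymbol_zero, pairing]
  · simp [hk, integral_eq hk, laplacianSymbol_ne_zero hk]

lemma integral_mul_zero_freq
    (β : UnitAddTorus (Fin n) → EuclideanSpace ℝ ((Fin n × Fin n) ⊕ Fin n))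
    (σ : UnitAddTorus (Fin n) → ℝ) : ∫ t, (σ t : ℂ) *
      ((1 + pairing (β t - coeffVec 1 0) (rieszSymbol 0)) * mFourier 0 t) =
        ((∫ t, σ t : ℝ) : ℂ) := by
  rw [← integral_complex_ofReal]
  simp [rieszSymbol, derivSymbol_zero, pairing, mFourier_zero]

lemma memLp_of_norm_sub_le (hβ : AEStronglyMeasurable β)
    (hβR : ∀ᵐ t, ‖β t - coeffVec 1 0‖ ≤ R) : MemLp β ∞ := by
  have hα : MemLp (fun t => β t - coeffVec 1 0) ∞ :=
    MemLp.of_bound (hβ.sub aestronglyMeasurable_const) R hβR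
  exact (memLp_congr_ae (Eventually.of_forall fun t => sub_add_cancel _ _)).1
    (hα.add (memLp_const (coeffVec 1 0)))

lemma memLp_one_add_pairing_mul_mFourier {p : ℝ≥0∞} (hβ : MemLp β p) (z) (k : Fin n → ℤ) :
    MemLp (fun t => (1 + pairing (β t) z) * mFourier k t) p := by
  have memLp_mFourier : MemLp (fun t => mFourier k t) p :=
    MemLp.of_bound (by fun_prop) 1 (Eventually.of_forall fun t => (norm_mFourier_apply k t).le)
  simp only [add_mul, one_mul]
  exact memLp_mFourier.add (memLp_pairing_mul_mFourier hβ z k)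

theorem IsWeakSolution.ae_eq_integral_mul (hβ : AEStronglyMeasurable β)
    (hβR : ∀ᵐ t, ‖β t - coeffVec 1 0‖ ≤ R) (hRM : R * √(1 + 1 / (4 * Real.pi ^ 2)) < 1)
    {ρ : UnitAddTorus (Fin n) → ℝ} (hρ : MemLp ρ 2) (hσ : MemLp σ 2) (ρ_sol : IsWeakSolution β ρ)
    (σ_sol : IsWeakSolution β σ) (integral_ρ : ∫ t, ρ t = 1) :
    σ =ᵐ[volume] fun t => (∫ t, σ t) * ρ t := by
  set s := ∫ t, σ t
  have hα : AEStronglyMeasurable fun t => β t - coeffVec 1 0 := hβ.sub aestronglyMeasurable_const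
  have hβ_top := memLp_of_norm_sub_le hβ hβR
  have integrable {τ : UnitAddTorus (Fin n) → ℝ} (hτ : MemLp τ 2) (k : Fin n → ℤ) :
      Integrable fun t => (τ t : ℂ) *
        ((1 + pairing (β t - coeffVec 1 0) (rieszSymbol k)) * mFourier k t) :=
    hτ.ofReal.integrable_mul
      (memLp_one_add_pairing_mul_mFourier (p := 2) (MemLp.of_bound hα R hβR) (rieszSymbol k) k)
  have coeff_sub (k) : ∫ t, ((σ t - s * ρ t : ℝ) : ℂ) *
      ((1 + pairing (β t - coeffVec 1 0) (rieszSymbol k)) * mFourier k t) = 0 := by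
    simp only [Complex.ofReal_sub, Complex.ofReal_mul, sub_mul, mul_assoc (s : ℂ)]
    rw [integral_sub (integrable hσ k) ((integrable hρ k).const_mul _), integral_const_mul]
    rcases eq_or_ne k 0 with rfl | hk
    · rw [integral_mul_zero_freq, integral_mul_zero_freq, integral_ρ, Complex.ofReal_one, mul_one,
        sub_self]
    · rw [(isWeakSolution_iff hβ_top hσ).1 σ_sol k hk, (isWeakSolution_iff hβ_top hρ).1 ρ_sol k hk,
        mul_zero, sub_zero]
  have hdiff : MemLp (fun t => ((σ t - s * ρ t : ℝ) : ℂ)) 2 := (hσ.sub (hρ.const_mul s)).ofReal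
  filter_upwards [ae_eq_zero_of_forall_integral_eq_zero hRM hα hβR norm_rieszSymbol_le hdiff
    coeff_sub] with t ht
  exact sub_eq_zero.1 (Complex.ofReal_eq_zero.1 ht)

theorem exists_isWeakSolution (hβ : AEStronglyMeasurable β)
    (hβR : ∀ᵐ t, ‖β t - coeffVec 1 0‖ ≤ R) (hR : 0 < R)
    (hRM : R * √(1 + 1 / (4 * Real.pi ^ 2)) < 1) :
    ∃ ρ : UnitAddTorus (Fin n) → ℝ,
      MemLp ρ 2 ∧ 0 ≤ᵐ[volume] ρ ∧ ∫ t, ρ t = 1 ∧ IsWeakSolution β ρ := by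
  have one_le_bound : 1 ≤ √(1 + 1 / (4 * Real.pi ^ 2)) :=
    Real.one_le_sqrt.2 (le_add_of_nonneg_right (by positivity))
  obtain ⟨ρ, hρ, ρ_nonneg, ρ_coeff⟩ := exists_density hR one_le_bound hRM
    (hβ.sub aestronglyMeasurable_const) hβR norm_rieszSymbol_le weakMaximumPrinciple_rieszSymbol
  refine ⟨ρ, hρ, ρ_nonneg, ?_, (isWeakSolution_iff (memLp_of_norm_sub_le hβ hβR) hρ).2
    fun k hk => (ρ_coeff k).trans (if_neg hk)⟩
  exact_mod_cast (integral_mul_zero_freq β ρ).symm.trans ((ρ_coeff 0).trans (if_pos rfl))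

end PerturbedLaplacian

section Cordes

variable {A : (Fin n → ℝ) → Matrix (Fin n) (Fin n) ℝ} {b : (Fin n → ℝ) → Fin n → ℝ} {c δ : ℝ}

/-- `A` and `b` are periodic, bounded coefficients of an operator `A : D² + b · ∇` satisfying the
Cordes condition with parameter `δ`, stated without divisions; `c` is a lower bound for `tr A`. -/
structure IsCordesPair (A : (Fin n → ℝ) → Matrix (Fin n) (Fin n) ℝ)
    (b : (Fin n → ℝ) → Fin n → ℝ) (c δ : ℝ) : Prop where
  measurable_matrix : ∀ i j, Measurable fun x => A x i j
  measurable_drift : ∀ i, Measurable fun x => b x i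
  periodic_matrix : IsPeriodic A
  periodic_drift : IsPeriodic b
  bounded : ∃ C : ℝ, ∀ᵐ x, frobSq (A x) + euclSq (b x) ≤ C
  pos : 0 < c
  le_trace : ∀ᵐ x, c ≤ (A x).trace
  lt_delta : 1 / (1 + 4 * Real.pi ^ 2) < δ
  cordes : ∀ᵐ x, (n - 1 + δ) * (frobSq (A x) + euclSq (b x)) ≤ (A x).trace ^ 2

lemma norm_smul_sub_sq {E : Type*} [NormedAddCommGroup E] [InnerProductSpace ℝ E] (u : E) {v : E}
    (hv : v ≠ 0) :
    ‖(inner ℝ u v / ‖v‖ ^ 2) • v - u‖ ^ 2 = ‖u‖ ^ 2 - inner ℝ u v ^ 2 / ‖v‖ ^ 2 := by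
  have : ‖v‖ ≠ 0 := norm_ne_zero_iff.2 hv
  rw [norm_sub_sq_real, norm_smul, mul_pow, Real.norm_eq_abs, sq_abs, real_inner_smul_left,
    real_inner_comm]
  field_simp
  ring

lemma norm_laplacian_sq :
    ‖(coeffVec 1 0 : EuclideanSpace ℝ ((Fin n × Fin n) ⊕ Fin n))‖ ^ 2 = n := by
  simp [norm_coeffVec_sq, frobSq, euclSq, Matrix.one_apply]

lemma trace_sq_le (M : Matrix (Fin n) (Fin n) ℝ) (v : Fin n → ℝ) :
    M.trace ^ 2 ≤ n * ‖coeffVec M v‖ ^ 2 := by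
  rw [← inner_laplacian_coeffVec M v, ← norm_laplacian_sq, ← mul_pow]
  exact sq_le_sq.2 ((abs_real_inner_le_norm _ _).trans (le_abs_self _))

lemma gam_eq (x : Fin n → ℝ) : gam A b x =
    inner ℝ (coeffVec 1 0) (coeffVec (A x) (b x)) / ‖coeffVec (A x) (b x)‖ ^ 2 := by
  rw [gam, inner_laplacian_coeffVec, norm_coeffVec_sq]

namespace IsCordesPair

lemma measurable_coeffVec (h : IsCordesPair A b c δ) :
    Measurable fun x => coeffVec (A x) (b x) := by
  refine (WithLp.measurable_toLp 2 _).comp (measurable_pi_iff.2 ?_)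
  rintro (⟨i, j⟩ | j)
  exacts [h.measurable_matrix i j, h.measurable_drift j]

lemma measurable_gam (h : IsCordesPair A b c δ) : Measurable (gam A b) := by
  simp only [funext gam_eq]
  exact (measurable_const.inner h.measurable_coeffVec).div (h.measurable_coeffVec.norm.pow_const 2)

lemma isPeriodic_gam (h : IsCordesPair A b c δ) : IsPeriodic (gam A b) := by
  intro x k
  simp only [gam, h.periodic_matrix x k, h.periodic_drift x k]

lemma exists_gam_mem_Icc (h : IsCordesPair A b c δ) :
    ∃ l u : ℝ, 0 < l ∧ ∀ᵐ x, gam A b x ∈ Set.Icc l u := by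
  obtain ⟨C, hC⟩ := h.bounded
  have := h.pos
  refine ⟨c / max C 1, n / c, by positivity, ?_⟩
  filter_upwards [hC, h.le_trace] with x hx hcx
  have trace_sq_le := trace_sq_le (A x) (b x)
  rw [norm_coeffVec_sq] at trace_sq_le
  have denom_pos : 0 < frobSq (A x) + euclSq (b x) := by
    refine pos_of_mul_pos_right ((pow_pos (this.trans_le hcx) 2).trans_le trace_sq_le) ?_
    positivity
  exact ⟨div_le_div₀ (this.le.trans hcx) hcx denom_pos (hx.trans (le_max_left _ _)),
    (div_le_div_iff₀ denom_pos this).2 (by nlinarith)⟩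

lemma exists_norm_gam_smul_sub_le (h : IsCordesPair A b c δ) :
    ∃ R, 0 < R ∧ R * √(1 + 1 / (4 * Real.pi ^ 2)) < 1 ∧
      ∀ᵐ x, ‖gam A b x • coeffVec (A x) (b x) - coeffVec 1 0‖ ≤ R := by
  set M := √(1 + 1 / (4 * Real.pi ^ 2))
  have M_pos : 0 < M := Real.sqrt_pos.2 (by positivity)
  have sqrt_lt : √(1 - δ) < 1 / M := by
    rw [one_div, ← Real.sqrt_inv]
    refine Real.sqrt_lt_sqrt_iff_of_pos (by positivity) |>.2 ?_
    calc 1 - δ < 1 - 1 / (1 + 4 * Real.pi ^ 2) := sub_lt_sub_left h.lt_delta 1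
      _ = (1 + 1 / (4 * Real.pi ^ 2))⁻¹ := by field_simp; ring
  obtain ⟨R, sqrt_lt_R, R_lt⟩ := exists_between sqrt_lt
  refine ⟨R, (Real.sqrt_nonneg _).trans_lt sqrt_lt_R, (lt_div_iff₀ M_pos).1 R_lt, ?_⟩
  filter_upwards [h.le_trace, h.cordes] with x htrace hcordes
  set v := coeffVec (A x) (b x) with v_def
  have hv : v ≠ 0 := by
    intro hv
    have := inner_laplacian_coeffVec (A x) (b x)
    rw [← v_def, hv, inner_zero_right] at this
    linarith [h.pos]
  have norm_sq_pos : 0 < ‖v‖ ^ 2 := by positivity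
  refine (Real.le_sqrt_of_sq_le ?_).trans sqrt_lt_R.le
  rw [gam_eq, norm_smul_sub_sq _ hv, norm_laplacian_sq, inner_laplacian_coeffVec]
  rw [← norm_coeffVec_sq, ← le_div_iff₀ norm_sq_pos] at hcordes
  linarith

end IsCordesPair

end Cordes

section InvariantMeasure

variable {A : (Fin n → ℝ) → Matrix (Fin n) (Fin n) ℝ} {b : (Fin n → ℝ) → Fin n → ℝ}
  {c δ : ℝ}

/-- The coefficients, on the torus, of the operator `γ (A : D² + b · ∇)`, which is a small
perturbation of the Laplacian. -/
def renormalizedCoeff (A : (Fin n → ℝ) → Matrix (Fin n) (Fin n) ℝ) (b : (Fin n → ℝ) → Fin n → ℝ)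
    (t : UnitAddTorus (Fin n)) : EuclideanSpace ℝ ((Fin n × Fin n) ⊕ Fin n) :=
  gam A b (rep t) • coeffVec (A (rep t)) (b (rep t))

/-- The density on `ℝⁿ` proportional to `γ ρ` with unit mass on the unit cell; it is the invariant
measure of `A : D² + b · ∇` when `ρ` is that of `γ (A : D² + b · ∇)`. -/
def invariantDensity (A : (Fin n → ℝ) → Matrix (Fin n) (Fin n) ℝ) (b : (Fin n → ℝ) → Fin n → ℝ)
    (ρ : UnitAddTorus (Fin n) → ℝ) (x : Fin n → ℝ) : ℝ :=
  (∫ t, gam A b (rep t) * ρ t)⁻¹ * (gam A b x * ρ (proj x))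

variable {ρ : UnitAddTorus (Fin n) → ℝ}

lemma invariantDensity_rep (t : UnitAddTorus (Fin n)) : invariantDensity A b ρ (rep t) =
    (∫ t, gam A b (rep t) * ρ t)⁻¹ * (gam A b (rep t) * ρ t) := by
  rw [invariantDensity, proj_rep]

lemma isPeriodic_rel {α : Type*} {f g : (Fin n → ℝ) → α} (hf : IsPeriodic f) (hg : IsPeriodic g)
    (r : α → α → Prop) : IsPeriodic fun x => r (f x) (g x) := by
  intro x k
  simp only [hf x k, hg x k]

lemma IsWeakSolution.const_mul
    {β : UnitAddTorus (Fin n) → EuclideanSpace ℝ ((Fin n × Fin n) ⊕ Fin n)}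
    (hρ : IsWeakSolution β ρ) (s : ℝ) : IsWeakSolution β fun t => s * ρ t := by
  intro φ hφ hper
  simp only [mul_assoc, integral_const_mul, hρ φ hφ hper, mul_zero]

lemma isWeakSolution_renormalizedCoeff_iff {r : (Fin n → ℝ) → ℝ}
    (hr : ∀ᵐ t, r (rep t) = gam A b (rep t) * ρ t) :
    IsWeakSolution (renormalizedCoeff A b) ρ ↔
      ∀ φ : (Fin n → ℝ) → ℝ, ContDiff ℝ 2 φ → IsPeriodic φ →
        ∫ x in unitCell n, r x * (frobInner (A x) (hess φ x) + dotc (b x) (grad φ x)) = 0 := by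
  refine forall₃_congr fun φ _ _ => ?_
  rw [← integral_rep, integral_congr_ae]
  filter_upwards [hr] with t ht
  rw [renormalizedCoeff, real_inner_smul_left, jet, inner_coeffVec, ht]
  ring

lemma mul_le_trace_of_ellip {M : Matrix (Fin n) (Fin n) ℝ} {lam : ℝ}
    (h : ∀ ξ : Fin n → ℝ, lam * euclSq ξ ≤ dotc ξ (M.mulVec ξ)) : n * lam ≤ M.trace := by
  have diag_ge (i : Fin n) : lam ≤ M i i := by
    simpa [euclSq, dotc, Pi.single_apply] using h (Pi.single i 1)
  calc n * lam = ∑ _i : Fin n, lam := by simp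
    _ ≤ M.trace := Finset.sum_le_sum fun i _ => diag_ge i

namespace IsCordesPair

lemma aestronglyMeasurable_renormalizedCoeff (h : IsCordesPair A b c δ) :
    AEStronglyMeasurable (renormalizedCoeff A b) :=
  ((h.measurable_gam.smul h.measurable_coeffVec).comp measurable_rep).aestronglyMeasurable

lemma exists_isWeakSolution (h : IsCordesPair A b c δ) :
    ∃ ρ : UnitAddTorus (Fin n) → ℝ, Measurable ρ ∧ MemLp ρ 2 ∧ 0 ≤ᵐ[volume] ρ ∧ ∫ t, ρ t = 1 ∧
      IsWeakSolution (renormalizedCoeff A b) ρ := by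
  obtain ⟨R, R_pos, hRM, hR⟩ := h.exists_norm_gam_smul_sub_le
  obtain ⟨ρ₀, hρ₀, ρ₀_nonneg, integral_ρ₀, ρ₀_sol⟩ := InvariantDensity.exists_isWeakSolution
    h.aestronglyMeasurable_renormalizedCoeff (ae_rep hR) R_pos hRM
  obtain ⟨ρ, hρ, ρ_eq⟩ := hρ₀.aestronglyMeasurable.aemeasurable
  refine ⟨ρ, hρ, (memLp_congr_ae ρ_eq).1 hρ₀, ρ₀_nonneg.trans ρ_eq.le,
    (integral_congr_ae ρ_eq).symm.trans integral_ρ₀, fun φ hφ hper => ?_⟩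
  rw [← ρ₀_sol φ hφ hper]
  refine integral_congr_ae ?_
  filter_upwards [ρ_eq] with t ht
  rw [ht]

lemma memLp_gam (h : IsCordesPair A b c δ) : MemLp (fun t => gam A b (rep t)) ∞ := by
  obtain ⟨l, u, hl, hgam⟩ := h.exists_gam_mem_Icc
  refine MemLp.of_bound (h.measurable_gam.comp measurable_rep).aestronglyMeasurable u ?_
  filter_upwards [ae_rep hgam] with t ht
  rw [Real.norm_of_nonneg (hl.le.trans ht.1)]
  exact ht.2

lemma memLp_inv_gam (h : IsCordesPair A b c δ) : MemLp (fun t => (gam A b (rep t))⁻¹) ∞ := by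
  obtain ⟨l, u, hl, hgam⟩ := h.exists_gam_mem_Icc
  refine MemLp.of_bound (h.measurable_gam.comp measurable_rep).inv.aestronglyMeasurable l⁻¹ ?_
  filter_upwards [ae_rep hgam] with t ht
  rw [Real.norm_of_nonneg (inv_nonneg.2 (hl.le.trans ht.1))]
  exact inv_anti₀ hl ht.1

lemma ae_gam_pos (h : IsCordesPair A b c δ) : ∀ᵐ t, 0 < gam A b (rep t) := by
  obtain ⟨l, u, hl, hgam⟩ := h.exists_gam_mem_Icc
  filter_upwards [ae_rep hgam] with t ht
  exact hl.trans_le ht.1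

lemma memLp_gam_mul (h : IsCordesPair A b c δ) (hρ : MemLp ρ 2) :
    MemLp (fun t => gam A b (rep t) * ρ t) 2 :=
  hρ.mul h.memLp_gam

lemma integral_gam_mul_pos (h : IsCordesPair A b c δ) (hρ : MemLp ρ 2) (ρ_nonneg : 0 ≤ᵐ[volume] ρ)
    (integral_ρ : ∫ t, ρ t = 1) : 0 < ∫ t, gam A b (rep t) * ρ t := by
  obtain ⟨l, u, hl, hgam⟩ := h.exists_gam_mem_Icc
  calc 0 < l := hl
    _ = ∫ t, l * ρ t := by rw [integral_const_mul, integral_ρ, mul_one]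
    _ ≤ ∫ t, gam A b (rep t) * ρ t := by
      refine integral_mono_ae ((hρ.integrable one_le_two).const_mul l)
        ((h.memLp_gam_mul hρ).integrable one_le_two) ?_
      filter_upwards [ae_rep hgam, ρ_nonneg] with t ht ρt_nonneg
      exact mul_le_mul_of_nonneg_right ht.1 ρt_nonneg

lemma isPeriodic_invariantDensity (h : IsCordesPair A b c δ) :
    IsPeriodic (invariantDensity A b ρ) := by
  intro x k
  simp only [invariantDensity, h.isPeriodic_gam x k, isPeriodic_comp_proj ρ x k]

theorem isInvariantMeasure_invariantDensity (h : IsCordesPair A b c δ) (hρ : Measurable ρ)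
    (hρ2 : MemLp ρ 2) (mass_pos : 0 < ∫ t, gam A b (rep t) * ρ t)
    (ρ_sol : IsWeakSolution (renormalizedCoeff A b) ρ) :
    IsInvariantMeasure A b (invariantDensity A b ρ) := by
  refine ⟨?_, h.isPeriodic_invariantDensity, ?_, ?_,
    (isWeakSolution_renormalizedCoeff_iff (Eventually.of_forall fun t => ?_)).1
      (ρ_sol.const_mul (∫ t, gam A b (rep t) * ρ t)⁻¹)⟩
  · exact (h.measurable_gam.mul (hρ.comp continuous_proj.measurable)).const_mul _
  · rw [IntegrableOn, ← measurePreserving_rep.integrable_comp_emb measurableEmbedding_rep]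
    simpa only [Function.comp_def, invariantDensity_rep] using
      ((h.memLp_gam_mul hρ2).const_mul _).integrable_sq
  · rw [← integral_rep]
    simp only [invariantDensity_rep]
    rw [integral_const_mul, inv_mul_cancel₀ mass_pos.ne']
  · rw [invariantDensity_rep, mul_left_comm]

lemma ae_nonneg_invariantDensity (h : IsCordesPair A b c δ) (ρ_nonneg : 0 ≤ᵐ[volume] ρ) :
    ∀ᵐ x, 0 ≤ invariantDensity A b ρ x := by
  refine ae_of_ae_rep (isPeriodic_rel (f := fun _ => 0) (fun _ _ => rfl)
    h.isPeriodic_invariantDensity (· ≤ ·)) ?_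
  have gam_mul_nonneg : ∀ᵐ t, 0 ≤ gam A b (rep t) * ρ t := by
    filter_upwards [h.ae_gam_pos, ρ_nonneg] with t gam_pos ρt_nonneg
    exact mul_nonneg gam_pos.le ρt_nonneg
  filter_upwards [gam_mul_nonneg] with t ht
  rw [invariantDensity_rep]
  exact mul_nonneg (inv_nonneg.2 (integral_nonneg_of_ae gam_mul_nonneg)) ht

theorem ae_eq_invariantDensity (h : IsCordesPair A b c δ) (hρ : MemLp ρ 2)
    (integral_ρ : ∫ t, ρ t = 1) (ρ_sol : IsWeakSolution (renormalizedCoeff A b) ρ)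
    {r : (Fin n → ℝ) → ℝ} (hr : IsInvariantMeasure A b r) :
    ∀ᵐ x, r x = invariantDensity A b ρ x := by
  obtain ⟨r_meas, r_per, r_sq, r_mass, r_sol⟩ := hr
  refine ae_of_ae_rep (isPeriodic_rel r_per h.isPeriodic_invariantDensity (· = ·)) ?_
  obtain ⟨R, -, hRM, hR⟩ := h.exists_norm_gam_smul_sub_le
  have r_memLp : MemLp (fun t => r (rep t)) 2 :=
    (memLp_two_iff_integrable_sq (r_meas.comp measurable_rep).aestronglyMeasurable).2
      ((measurePreserving_rep.integrable_comp_emb measurableEmbedding_rep).2 r_sq)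
  have r_eq_gam_mul :
      ∀ᵐ t, r (rep t) = gam A b (rep t) * ((gam A b (rep t))⁻¹ * r (rep t)) := by
    filter_upwards [h.ae_gam_pos] with t gam_pos
    rw [mul_inv_cancel_left₀ gam_pos.ne']
  have quotient_memLp : MemLp (fun t => (gam A b (rep t))⁻¹ * r (rep t)) 2 :=
    r_memLp.mul h.memLp_inv_gam
  have quotient_eq := IsWeakSolution.ae_eq_integral_mul h.aestronglyMeasurable_renormalizedCoeff
    (ae_rep hR) hRM hρ quotient_memLp ρ_sol
    ((isWeakSolution_renormalizedCoeff_iff r_eq_gam_mul).2 r_sol) integral_ρ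
  set s := ∫ t, (gam A b (rep t))⁻¹ * r (rep t)
  have r_eq : ∀ᵐ t, r (rep t) = s * (gam A b (rep t) * ρ t) := by
    filter_upwards [r_eq_gam_mul, quotient_eq] with t ht quotient_eq
    rw [ht, quotient_eq, mul_left_comm]
  have mass_eq : s * ∫ t, gam A b (rep t) * ρ t = 1 := by
    rw [← r_mass, ← integral_rep, integral_congr_ae r_eq, integral_const_mul]
  filter_upwards [r_eq] with t ht
  rw [ht, invariantDensity_rep, eq_inv_of_mul_eq_one_left mass_eq]

lemma of_settingB {lam Lam : ℝ} (hn : 1 ≤ n) (hAB : SettingB A b lam Lam δ) :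
    IsCordesPair A b (n * lam) δ := by
  have one_le_n : (1 : ℝ) ≤ n := mod_cast hn
  have lam_pos := hAB.lam_pos
  have trace_ge : ∀ᵐ x, n * lam ≤ (A x).trace :=
    hAB.ellip.mono fun x hx => mul_le_trace_of_ellip fun ξ => (hx ξ).1
  have lt_delta : 1 / (1 + 4 * Real.pi ^ 2) < δ := by
    refine lt_of_le_of_lt ?_ hAB.delta_mem.1
    rw [div_le_div_iff₀ (by positivity) (by positivity)]
    nlinarith [sq_nonneg Real.pi]
  refine ⟨hAB.measA, hAB.measb, hAB.perA, hAB.perb, ?_, by positivity, trace_ge, lt_delta, ?_⟩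
  · obtain ⟨CA, hCA⟩ := hAB.bddA
    obtain ⟨Cb, hCb⟩ := hAB.bddb
    exact ⟨CA + Cb, by filter_upwards [hCA, hCb] with x hA hb using add_le_add hA hb⟩
  · have delta_pos : 0 < δ := lt_trans (by positivity) lt_delta
    filter_upwards [trace_ge, hAB.cordes] with x htrace hcordes
    have trace_pos : 0 < (A x).trace := lt_of_lt_of_le (by positivity) htrace
    rw [div_le_div_iff₀ (by positivity) (by linarith)] at hcordes
    linarith

end IsCordesPair

end InvariantMeasure

end InvariantDensity

end

theorem stmt_0_general {n : ℕ} {A : (Fin n → ℝ) → Matrix (Fin n) (Fin n) ℝ}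
    {b : (Fin n → ℝ) → Fin n → ℝ} {c δ : ℝ} (h : InvariantDensity.IsCordesPair A b c δ) :
    ∃ r : (Fin n → ℝ) → ℝ, IsInvariantMeasure A b r ∧ (∀ᵐ x, 0 ≤ r x) ∧
      ∀ r' : (Fin n → ℝ) → ℝ, IsInvariantMeasure A b r' → ∀ᵐ x, r' x = r x := by
  obtain ⟨ρ, hρ, hρ2, ρ_nonneg, integral_ρ, ρ_sol⟩ := h.exists_isWeakSolution
  have mass_pos := h.integral_gam_mul_pos hρ2 ρ_nonneg integral_ρ
  exact ⟨InvariantDensity.invariantDensity A b ρ,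
    h.isInvariantMeasure_invariantDensity hρ hρ2 mass_pos ρ_sol,
    h.ae_nonneg_invariantDensity ρ_nonneg,
    fun r' hr' => h.ae_eq_invariantDensity hρ2 integral_ρ ρ_sol hr'⟩

/-- In Setting B there exists a nonnegative invariant measure
`r ∈ L²_per(Y)` with `∫_Y r = 1`, solving the stationary FPK problem in the very
weak sense, and it is unique up to equality almost everywhere. -/
theorem stmt_0 {n : ℕ} (hn : 1 ≤ n)
    (A : (Fin n → ℝ) → Matrix (Fin n) (Fin n) ℝ) (b : (Fin n → ℝ) → Fin n → ℝ)
    (lam Lam δ : ℝ) (hAB : SettingB A b lam Lam δ) :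
    ∃ r : (Fin n → ℝ) → ℝ, IsInvariantMeasure A b r ∧
      (∀ᵐ x ∂(volume : Measure (Fin n → ℝ)), 0 ≤ r x) ∧
      ∀ r' : (Fin n → ℝ) → ℝ, IsInvariantMeasure A b r' →
        ∀ᵐ x ∂(volume : Measure (Fin n → ℝ)), r' x = r x :=
  stmt_0_general (InvariantDensity.IsCordesPair.of_settingB hn hAB)
end
end

section
/- Let n ≥ 1 and suppose (A,b) satisfies Setting B. Let r : ℝⁿ → ℝ be measurable, ℤⁿ-periodic with ∫_Y r² < ∞, ∫_Y r = 1, and ∫_Y r(A:D²φ + b·∇φ) = 0 for every twice continuously differentiable ℤⁿ-periodic φ : ℝⁿ → ℝ (the invariant measure). Then every measurable ℤⁿ-periodic function u : ℝⁿ → ℝ with ∫_Y u² < ∞ satisfying ∫_Y u(A:D²φ + b·∇φ) = 0 for every twice continuously differentiable ℤⁿ-periodic φ is equal to c·r almost everywhere for some constant c ∈ ℝ. -/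
open MeasureTheory

noncomputable section

/-!
Write `𝓛φ = A : D²φ + b · ∇φ` and `γ = gam A b`. The Cordes condition says that `γ𝓛` is close to the
Laplacian: `(γ𝓛φ - Δφ)² ≤ (1 - δ) (|D²φ|² + |∇φ|²)` pointwise. If `g` is a very weak solution, then
`w = g / γ` satisfies `∫ w Δφ = ∫ w (Δφ - γ𝓛φ) ≤ (∫ w² + (1 - δ) ∫ (|D²φ|² + |∇φ|²)) / 2`. When
`∫ w = 0` we may let `φ` run through the partial Fourier sums of the solution of `Δφ = w`; since
`-Δ` has spectral gap `4π²` on the torus, the last integral is at most `(1 + 1 / (4π²)) ∫ w²`, and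
`(1 - δ) (1 + 1 / (4π²)) < 1` forces `w = 0`. Thus the linear functional `g ↦ ∫ g / γ` is injective
on the very weak solutions, which therefore form a space of dimension at most one.
-/

section UnitCell

variable {n : ℕ}

/-- Lebesgue measure on the unit cell `Y`. -/
abbrev cellVolume (n : ℕ) : Measure (Fin n → ℝ) := volume.restrict (unitCell n)

lemma measurableSet_unitCell (n : ℕ) : MeasurableSet (unitCell n) :=
  MeasurableSet.univ_pi fun _ => measurableSet_Ioo

instance isProbabilityMeasure_cellVolume (n : ℕ) : IsProbabilityMeasure (cellVolume n) :=
  ⟨by simp [unitCell, volume_pi_pi]⟩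

lemma memLp_top_cellVolume_of_continuous {E : Type*} [NormedAddCommGroup E]
    [SecondCountableTopologyEither (Fin n → ℝ) E]
    {f : (Fin n → ℝ) → E} (hf : Continuous f) : MemLp f ⊤ (cellVolume n) := by
  obtain ⟨C, hC⟩ := (isCompact_Icc (a := (0 : Fin n → ℝ)) (b := 1)).exists_bound_of_continuousOn
    hf.continuousOn
  refine memLp_top_of_bound hf.aestronglyMeasurable C ?_
  filter_upwards [ae_restrict_mem (measurableSet_unitCell n)] with x hx
  exact hC x ⟨fun i => (hx i trivial).1.le, fun i => (hx i trivial).2.le⟩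

-- The half-open cell is written in the form used by `UnitAddTorus.measurableEquivPiIoc`.
lemma unitCell_ae_eq_Ioc (n : ℕ) : unitCell n =ᵐ[volume]
    {x : Fin n → ℝ | ∀ i, x i ∈ Set.Ioc ((0 : Fin n → ℝ) i) ((0 : Fin n → ℝ) i + 1)} := by
  have h_pi : {x : Fin n → ℝ | ∀ i, x i ∈ Set.Ioc ((0 : Fin n → ℝ) i) ((0 : Fin n → ℝ) i + 1)} =
      Set.univ.pi fun _ => Set.Ioc (0 : ℝ) 1 := by
    ext x
    simp
  rw [h_pi]
  exact (Measure.univ_pi_Ioo_ae_eq_Icc (μ := fun _ => (volume : Measure ℝ))).trans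
    (Measure.univ_pi_Ioc_ae_eq_Icc (μ := fun _ => (volume : Measure ℝ))).symm

lemma ae_of_ae_cellVolume {p : (Fin n → ℝ) → Prop} (hp : IsPeriodic p)
    (h : ∀ᵐ x ∂cellVolume n, p x) : ∀ᵐ x, p x := by
  rw [cellVolume, Measure.restrict_congr_set (unitCell_ae_eq_Ioc n),
    ae_restrict_iff' (MeasurableSet.univ_pi' fun _ => measurableSet_Ioc)] at h
  have h_translates : ∀ᵐ x : Fin n → ℝ, ∀ k : Fin n → ℤ,
      (∀ i, (x + fun i => (k i : ℝ)) i ∈ Set.Ioc ((0 : Fin n → ℝ) i) ((0 : Fin n → ℝ) i + 1)) →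
        p (x + fun i => (k i : ℝ)) :=
    ae_all_iff.2 fun k =>
      (measurePreserving_add_right volume fun i => (k i : ℝ)).quasiMeasurePreserving.ae h
  filter_upwards [h_translates] with x hx
  rw [← hp x fun i => 1 - ⌈x i⌉]
  refine hx _ fun i => ?_
  simp only [Pi.add_apply, Pi.zero_apply, zero_add, Set.mem_Ioc]
  push_cast
  constructor <;> linarith [Int.le_ceil (x i), Int.ceil_lt_add_one (x i)]

end UnitCell

section PlaneWaves

variable {n : ℕ}

/-- The plane wave `x ↦ exp (2πi k·x)`. -/
def wave (k : Fin n → ℤ) (x : Fin n → ℝ) : ℂ :=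
  Complex.exp (2 * Real.pi * Complex.I * ∑ j, (k j : ℂ) * x j)

lemma wave_zero (x : Fin n → ℝ) : wave 0 x = 1 := by
  simp [wave]

lemma contDiff_wave (k : Fin n → ℤ) {m : WithTop ℕ∞} : ContDiff ℝ m (wave k) := by
  unfold wave
  have (j : Fin n) : ContDiff ℝ m fun x : Fin n → ℝ => (x j : ℂ) :=
    Complex.ofRealCLM.contDiff.comp (contDiff_apply ℝ ℝ j)
  fun_prop

lemma isPeriodic_wave (k : Fin n → ℤ) : IsPeriodic (wave k) := by
  intro x m
  have h_phase : 2 * Real.pi * Complex.I * ∑ j, (k j : ℂ) * ((x + fun i => (m i : ℝ)) j : ℝ) =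
      2 * Real.pi * Complex.I * ∑ j, (k j : ℂ) * x j +
        (∑ j, k j * m j : ℤ) * (2 * Real.pi * Complex.I) := by
    simp only [Pi.add_apply, Complex.ofReal_add, mul_add, Finset.sum_add_distrib]
    push_cast
    ring
  rw [wave, h_phase, Complex.exp_add, Complex.exp_int_mul_two_pi_mul_I, mul_one, wave]

lemma hasFDerivAt_wave (k : Fin n → ℤ) (x : Fin n → ℝ) :
    HasFDerivAt (wave k) (wave k x • (2 * Real.pi * Complex.I : ℂ) •
      ∑ j, (k j : ℂ) • Complex.ofRealCLM.comp
        (ContinuousLinearMap.proj j : (Fin n → ℝ) →L[ℝ] ℝ)) x := by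
  refine HasFDerivAt.cexp (HasFDerivAt.const_mul (HasFDerivAt.fun_sum fun j _ => ?_) _)
  exact ((Complex.ofRealCLM.comp
    (ContinuousLinearMap.proj j : (Fin n → ℝ) →L[ℝ] ℝ)).hasFDerivAt (x := x)).const_mul _

/-- The trigonometric polynomial with frequencies in `S` and coefficients `a`. -/
def trigPoly (S : Finset (Fin n → ℤ)) (a : (Fin n → ℤ) → ℂ) (x : Fin n → ℝ) : ℂ :=
  ∑ k ∈ S, a k * wave k x

lemma contDiff_trigPoly (S : Finset (Fin n → ℤ)) (a : (Fin n → ℤ) → ℂ) {m : WithTop ℕ∞} :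
    ContDiff ℝ m (trigPoly S a) := by
  have := fun k : Fin n → ℤ => contDiff_wave k (m := m)
  unfold trigPoly
  fun_prop

lemma contDiff_re_trigPoly (S : Finset (Fin n → ℤ)) (a : (Fin n → ℤ) → ℂ) {m : WithTop ℕ∞} :
    ContDiff ℝ m fun x => (trigPoly S a x).re :=
  Complex.reCLM.contDiff.comp (contDiff_trigPoly S a)

lemma isPeriodic_trigPoly (S : Finset (Fin n → ℤ)) (a : (Fin n → ℤ) → ℂ) :
    IsPeriodic (trigPoly S a) := fun x m => by
  simp only [trigPoly, isPeriodic_wave _ x m]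

lemma pd_re_trigPoly (S : Finset (Fin n → ℤ)) (a : (Fin n → ℤ) → ℂ) (i : Fin n) :
    pd (fun x => (trigPoly S a x).re) i =
      fun x => (trigPoly S (fun k => 2 * Real.pi * Complex.I * k i * a k) x).re := by
  funext x
  have h_deriv := Complex.reCLM.hasFDerivAt.comp x
    (HasFDerivAt.fun_sum fun k (_ : k ∈ S) => (hasFDerivAt_wave k x).const_mul (a k))
  change fderiv ℝ (Complex.reCLM ∘ trigPoly S a) x _ = _
  unfold trigPoly
  rw [h_deriv.fderiv]
  simp only [ContinuousLinearMap.comp_apply, Complex.reCLM_apply]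
  congr 1
  rw [sum_apply]
  refine Finset.sum_congr rfl fun k _ => ?_
  simp only [smul_apply, sum_apply, ContinuousLinearMap.comp_apply,
    ContinuousLinearMap.proj_apply, Pi.single_apply, apply_ite, Complex.ofRealCLM_apply,
    Complex.ofReal_one, Complex.ofReal_zero, smul_eq_mul, mul_one, mul_zero, Finset.sum_ite_eq',
    Finset.mem_univ, ↓reduceIte]
  ring

end PlaneWaves

section FourierSeries

variable {n : ℕ}

-- Fourier analysis on `UnitAddTorus` is stated for the Haar probability measure of the circle.
local instance : MeasureSpace UnitAddCircle := ⟨AddCircle.haarAddCircle⟩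

local instance : IsProbabilityMeasure (volume : Measure UnitAddCircle) :=
  inferInstanceAs (IsProbabilityMeasure AddCircle.haarAddCircle)

/-- The representative of a point of the torus `ℝⁿ / ℤⁿ` in the half-open cell `(0,1]ⁿ`; it carries
integrals over the unit cell to integrals over the torus. -/
def torusToCell (t : UnitAddTorus (Fin n)) : Fin n → ℝ :=
  (UnitAddTorus.measurableEquivPiIoc (0 : Fin n → ℝ) t).1

lemma measurePreserving_torusToCell :
    MeasurePreserving (torusToCell (n := n)) volume (cellVolume n) := by
  rw [cellVolume, Measure.restrict_congr_set (unitCell_ae_eq_Ioc n)]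
  exact (measurePreserving_subtype_coe (MeasurableSet.univ_pi' fun _ => measurableSet_Ioc)).comp
    (UnitAddTorus.measurePreserving_equivPiIoc (0 : Fin n → ℝ))

lemma measurableEmbedding_torusToCell : MeasurableEmbedding (torusToCell (n := n)) :=
  (MeasurableEmbedding.subtype_coe (MeasurableSet.univ_pi' fun _ => measurableSet_Ioc)).comp
    (UnitAddTorus.measurableEquivPiIoc (0 : Fin n → ℝ)).measurableEmbedding

lemma integral_comp_torusToCell {E : Type*} [NormedAddCommGroup E] [NormedSpace ℝ E]
    (f : (Fin n → ℝ) → E) :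
    ∫ t : UnitAddTorus (Fin n), f (torusToCell t) = ∫ x in unitCell n, f x :=
  measurePreserving_torusToCell.integral_comp measurableEmbedding_torusToCell f

lemma wave_torusToCell (k : Fin n → ℤ) (t : UnitAddTorus (Fin n)) :
    wave k (torusToCell t) = UnitAddTorus.mFourier k t := by
  have h_coe : (fun i => (torusToCell t i : UnitAddCircle)) = t :=
    (UnitAddTorus.measurableEquivPiIoc (0 : Fin n → ℝ)).symm_apply_apply t
  conv_rhs => rw [← h_coe]
  simp only [UnitAddTorus.mFourier, ContinuousMap.coe_mk, fourier_coe_apply, ← Complex.exp_sum,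
    wave, Finset.mul_sum]
  congr 1
  refine Finset.sum_congr rfl fun i _ => ?_
  push_cast
  ring

/-- The `k`-th Fourier coefficient of a function on the unit cell. -/
def cellFourierCoeff (f : (Fin n → ℝ) → ℂ) (k : Fin n → ℤ) : ℂ :=
  ∫ x in unitCell n, starRingEnd ℂ (wave k x) * f x

lemma hasSum_norm_sq_cellFourierCoeff {f : (Fin n → ℝ) → ℂ} (hf : MemLp f 2 (cellVolume n)) :
    HasSum (fun k => ‖cellFourierCoeff f k‖ ^ 2) (∫ x in unitCell n, ‖f x‖ ^ 2) := by
  have hL2 := hf.comp_measurePreserving measurePreserving_torusToCell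
  convert UnitAddTorus.hasSum_sq_mFourierCoeff (hL2.toLp _) using 1
  · funext k
    rw [cellFourierCoeff, ← integral_comp_torusToCell, UnitAddTorus.mFourierCoeff]
    congr 2
    refine integral_congr_ae (hL2.coeFn_toLp.mono fun t ht => ?_)
    simp only [ht, wave_torusToCell, UnitAddTorus.mFourier_neg, smul_eq_mul, Function.comp_apply]
  · rw [← integral_comp_torusToCell]
    exact integral_congr_ae (hL2.coeFn_toLp.mono fun t ht => by simp only [ht, Function.comp_apply])

lemma integral_norm_sq_trigPoly (S : Finset (Fin n → ℤ)) (a : (Fin n → ℤ) → ℂ) :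
    ∫ x in unitCell n, ‖trigPoly S a x‖ ^ 2 = ∑ k ∈ S, ‖a k‖ ^ 2 := by
  have h_inner := UnitAddTorus.orthonormal_mFourier.inner_sum a a S
  simp only [UnitAddTorus.mFourierLp, ← map_smul, ← map_sum] at h_inner
  rw [ContinuousMap.inner_toLp] at h_inner
  rw [← integral_comp_torusToCell, ← Complex.ofReal_inj, ← integral_complex_ofReal]
  simp only [Complex.ofReal_pow, Complex.ofReal_sum, ← Complex.mul_conj', trigPoly,
    wave_torusToCell]
  simpa [mul_comm] using h_inner

lemma integral_sq_re_trigPoly_le (S : Finset (Fin n → ℤ)) (a : (Fin n → ℤ) → ℂ) :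
    ∫ x in unitCell n, (trigPoly S a x).re ^ 2 ≤ ∑ k ∈ S, ‖a k‖ ^ 2 := by
  rw [← integral_norm_sq_trigPoly]
  refine integral_mono_of_nonneg (.of_forall fun x => sq_nonneg _)
    ((memLp_top_cellVolume_of_continuous
      ((contDiff_trigPoly S a (m := 0)).continuous.norm.pow 2)).integrable le_top)
    (.of_forall fun x => ?_)
  exact sq_le_sq.2 (by simpa using Complex.abs_re_le_norm (trigPoly S a x))

lemma integral_mul_wave_eq_conj_cellFourierCoeff (f : (Fin n → ℝ) → ℝ) (k : Fin n → ℤ) :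
    ∫ x in unitCell n, f x * wave k x =
      starRingEnd ℂ (cellFourierCoeff (fun x => (f x : ℂ)) k) := by
  rw [cellFourierCoeff, ← integral_conj]
  simp only [map_mul, Complex.conj_conj, Complex.conj_ofReal, mul_comm]

lemma integral_mul_re_trigPoly_cellFourierCoeff {f : (Fin n → ℝ) → ℝ}
    (hf : Integrable f (cellVolume n)) (S : Finset (Fin n → ℤ)) :
    ∫ x in unitCell n, f x * (trigPoly S (cellFourierCoeff fun x => (f x : ℂ)) x).re =
      ∑ k ∈ S, ‖cellFourierCoeff (fun x => (f x : ℂ)) k‖ ^ 2 := by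
  set c := cellFourierCoeff fun x => (f x : ℂ) with hc
  have h_int (k : Fin n → ℤ) :
      Integrable (fun x => c k * (f x * wave k x)) (cellVolume n) :=
    (hf.ofReal.mul_of_top_left
      (memLp_top_cellVolume_of_continuous (contDiff_wave k (m := 0)).continuous)).const_mul _
  calc ∫ x in unitCell n, f x * (trigPoly S c x).re
      = ∫ x in unitCell n, RCLike.re (∑ k ∈ S, c k * (f x * wave k x)) := by
        congr with x
        rw [trigPoly, RCLike.re_eq_complex_re, ← Complex.re_ofReal_mul, Finset.mul_sum]
        simp only [mul_left_comm]
    _ = (∑ k ∈ S, c k * ∫ x in unitCell n, f x * wave k x).re := by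
        rw [integral_re (integrable_finsetSum _ fun k _ => h_int k),
          integral_finsetSum _ fun k _ => h_int k]
        simp only [integral_const_mul, RCLike.re_eq_complex_re]
    _ = ∑ k ∈ S, ‖c k‖ ^ 2 := by
        simp only [integral_mul_wave_eq_conj_cellFourierCoeff, ← hc, Complex.mul_conj',
          ← Complex.ofReal_pow, ← Complex.ofReal_sum, Complex.ofReal_re]

end FourierSeries

section Derivatives

variable {n : ℕ}

lemma contDiff_pd {φ : (Fin n → ℝ) → ℝ} {m : WithTop ℕ∞} (hφ : ContDiff ℝ (m + 1) φ)
    (i : Fin n) : ContDiff ℝ m (pd φ i) :=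
  (hφ.fderiv_right le_rfl).clm_apply contDiff_const

lemma continuous_grad {φ : (Fin n → ℝ) → ℝ} (hφ : ContDiff ℝ 1 φ) : Continuous (grad φ) :=
  continuous_pi fun i => (contDiff_pd (m := 0) hφ i).continuous

lemma continuous_hess {φ : (Fin n → ℝ) → ℝ} (hφ : ContDiff ℝ 2 φ) : Continuous (hess φ) :=
  continuous_matrix fun i j =>
    (contDiff_pd (m := 0) (contDiff_pd (m := 1) hφ j) i).continuous

lemma integrable_euclSq_grad {φ : (Fin n → ℝ) → ℝ} (hφ : ContDiff ℝ 1 φ) :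
    Integrable (fun x => euclSq (grad φ x)) (cellVolume n) := by
  have h_grad := continuous_grad hφ
  refine (memLp_top_cellVolume_of_continuous ?_).integrable le_top
  unfold euclSq
  fun_prop

lemma frobSq_hess (φ : (Fin n → ℝ) → ℝ) (x : Fin n → ℝ) :
    frobSq (hess φ x) = ∑ j, euclSq (grad (pd φ j) x) :=
  Finset.sum_comm

lemma integrable_frobSq_hess {φ : (Fin n → ℝ) → ℝ} (hφ : ContDiff ℝ 2 φ) :
    Integrable (fun x => frobSq (hess φ x)) (cellVolume n) := by
  simp only [frobSq_hess]
  exact integrable_finsetSum _ fun j _ => integrable_euclSq_grad (contDiff_pd (m := 1) hφ j)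

end Derivatives

section HessianEstimate

variable {n : ℕ}

/-- The eigenvalue `4π²|k|²` of `-Δ` on the plane wave with frequency `k`. -/
def waveEigenvalue (k : Fin n → ℤ) : ℝ := (2 * Real.pi) ^ 2 * ∑ j, (k j : ℝ) ^ 2

lemma waveEigenvalue_zero : waveEigenvalue (0 : Fin n → ℤ) = 0 := by
  simp [waveEigenvalue]

lemma four_pi_sq_le_waveEigenvalue {k : Fin n → ℤ} (hk : k ≠ 0) :
    4 * Real.pi ^ 2 ≤ waveEigenvalue k := by
  obtain ⟨j, hj⟩ := Function.ne_iff.1 hk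
  have h_one_le : (1 : ℝ) ≤ (k j : ℝ) ^ 2 := by
    exact_mod_cast (one_le_sq_iff_one_le_abs (k j)).2 (Int.one_le_abs hj)
  have h_sum : (k j : ℝ) ^ 2 ≤ ∑ i, (k i : ℝ) ^ 2 :=
    Finset.single_le_sum (fun i _ => sq_nonneg (k i : ℝ)) (Finset.mem_univ j)
  rw [waveEigenvalue, mul_pow]
  nlinarith [sq_nonneg Real.pi]

lemma sum_norm_sq_gradient_coeff (k : Fin n → ℤ) (z : ℂ) :
    ∑ i, ‖2 * Real.pi * Complex.I * k i * z‖ ^ 2 = waveEigenvalue k * ‖z‖ ^ 2 := by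
  rw [waveEigenvalue, Finset.mul_sum, Finset.sum_mul]
  refine Finset.sum_congr rfl fun i _ => ?_
  simp only [norm_mul, Complex.norm_ofNat, Complex.norm_real, Complex.norm_I, Complex.norm_intCast,
    mul_pow, Real.norm_eq_abs, sq_abs]
  ring

lemma lap_re_trigPoly (S : Finset (Fin n → ℤ)) (a : (Fin n → ℤ) → ℂ) (x : Fin n → ℝ) :
    lap (fun x => (trigPoly S a x).re) x =
      (trigPoly S (fun k => -(waveEigenvalue k * a k)) x).re := by
  simp only [lap, pd_re_trigPoly, ← Complex.re_sum]
  congr 1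
  simp only [trigPoly]
  rw [Finset.sum_comm]
  refine Finset.sum_congr rfl fun k _ => ?_
  simp only [waveEigenvalue, ← Finset.sum_mul]
  congr 1
  push_cast
  rw [Finset.mul_sum, Finset.sum_mul, ← Finset.sum_neg_distrib]
  refine Finset.sum_congr rfl fun i _ => ?_
  linear_combination (2 * Real.pi * k i) ^ 2 * a k * Complex.I_sq

lemma integral_euclSq_grad_re_trigPoly_le (S : Finset (Fin n → ℤ)) (a : (Fin n → ℤ) → ℂ) :
    ∫ x in unitCell n, euclSq (grad (fun x => (trigPoly S a x).re) x) ≤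
      ∑ k ∈ S, waveEigenvalue k * ‖a k‖ ^ 2 := by
  simp only [euclSq, grad, pd_re_trigPoly, ← sum_norm_sq_gradient_coeff]
  have h_int (c : (Fin n → ℤ) → ℂ) :
      Integrable (fun x => (trigPoly S c x).re ^ 2) (cellVolume n) :=
    (memLp_top_cellVolume_of_continuous
      ((contDiff_re_trigPoly S c (m := 0)).continuous.pow 2)).integrable le_top
  rw [integral_finsetSum _ fun i _ => h_int _, Finset.sum_comm]
  exact Finset.sum_le_sum fun i _ => integral_sq_re_trigPoly_le S _

lemma integral_frobSq_hess_re_trigPoly_le (S : Finset (Fin n → ℤ)) (a : (Fin n → ℤ) → ℂ) :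
    ∫ x in unitCell n, frobSq (hess (fun x => (trigPoly S a x).re) x) ≤
      ∑ k ∈ S, waveEigenvalue k ^ 2 * ‖a k‖ ^ 2 := by
  simp only [frobSq_hess, pd_re_trigPoly]
  rw [integral_finsetSum _ fun j _ => integrable_euclSq_grad (contDiff_re_trigPoly S _)]
  refine (Finset.sum_le_sum fun j _ => integral_euclSq_grad_re_trigPoly_le S _).trans ?_
  rw [Finset.sum_comm]
  simp only [← Finset.mul_sum, sum_norm_sq_gradient_coeff]
  simp only [sq, mul_assoc, le_refl]

lemma integral_frobSq_hess_add_euclSq_grad_re_trigPoly_le (S : Finset (Fin n → ℤ))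
    (a : (Fin n → ℤ) → ℂ) :
    ∫ x in unitCell n, (frobSq (hess (fun x => (trigPoly S a x).re) x) +
        euclSq (grad (fun x => (trigPoly S a x).re) x)) ≤
      (1 + 1 / (4 * Real.pi ^ 2)) * ∑ k ∈ S, ‖waveEigenvalue k * a k‖ ^ 2 := by
  have h_freq (k : Fin n → ℤ) :
      waveEigenvalue k ≤ 1 / (4 * Real.pi ^ 2) * waveEigenvalue k ^ 2 := by
    rcases eq_or_ne k 0 with rfl | hk
    · simp [waveEigenvalue_zero]
    · have h_gap := four_pi_sq_le_waveEigenvalue hk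
      have h_pos : 0 < 4 * Real.pi ^ 2 := by positivity
      rw [one_div_mul_eq_div, le_div_iff₀ h_pos]
      nlinarith
  rw [integral_add (integrable_frobSq_hess (contDiff_re_trigPoly S a))
    (integrable_euclSq_grad (contDiff_re_trigPoly S a))]
  refine (add_le_add (integral_frobSq_hess_re_trigPoly_le S a)
    (integral_euclSq_grad_re_trigPoly_le S a)).trans ?_
  rw [← Finset.sum_add_distrib, Finset.mul_sum]
  refine Finset.sum_le_sum fun k _ => ?_
  rw [norm_mul, Complex.norm_real, mul_pow, Real.norm_eq_abs, sq_abs]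
  nlinarith [h_freq k, sq_nonneg ‖a k‖]

end HessianEstimate

section PoissonTest

variable {n : ℕ} {w : (Fin n → ℝ) → ℝ}

lemma cellFourierCoeff_ofReal_zero (hw : ∫ x in unitCell n, w x = 0) :
    cellFourierCoeff (fun x => (w x : ℂ)) 0 = 0 := by
  simp only [cellFourierCoeff, wave_zero, map_one, one_mul]
  rw [integral_complex_ofReal, hw, Complex.ofReal_zero]

lemma exists_neg_waveEigenvalue_mul_eq_cellFourierCoeff (hw : ∫ x in unitCell n, w x = 0) :
    ∃ a : (Fin n → ℤ) → ℂ,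
      ∀ k, -(waveEigenvalue k * a k) = cellFourierCoeff (fun x => (w x : ℂ)) k := by
  refine ⟨fun k => -cellFourierCoeff (fun x => (w x : ℂ)) k / waveEigenvalue k, fun k => ?_⟩
  rcases eq_or_ne k 0 with rfl | hk
  · simp only [waveEigenvalue_zero, cellFourierCoeff_ofReal_zero hw, Complex.ofReal_zero, zero_mul,
      neg_zero]
  · have h_pos : 0 < waveEigenvalue k :=
      lt_of_lt_of_le (by positivity) (four_pi_sq_le_waveEigenvalue hk)
    rw [mul_div_cancel₀ _ (Complex.ofReal_ne_zero.2 h_pos.ne'), neg_neg]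

lemma sum_norm_sq_cellFourierCoeff_le {q : ℝ} (hw : MemLp w 2 (cellVolume n))
    (hw_mean : ∫ x in unitCell n, w x = 0) (hq : 0 ≤ q)
    (h_test : ∀ φ : (Fin n → ℝ) → ℝ, ContDiff ℝ 2 φ → IsPeriodic φ →
      ∫ x in unitCell n, w x * lap φ x ≤ ((∫ x in unitCell n, w x ^ 2) +
        q * ∫ x in unitCell n, (frobSq (hess φ x) + euclSq (grad φ x))) / 2)
    (S : Finset (Fin n → ℤ)) :
    (2 - q * (1 + 1 / (4 * Real.pi ^ 2))) *
        ∑ k ∈ S, ‖cellFourierCoeff (fun x => (w x : ℂ)) k‖ ^ 2 ≤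
      ∫ x in unitCell n, w x ^ 2 := by
  obtain ⟨a, ha⟩ := exists_neg_waveEigenvalue_mul_eq_cellFourierCoeff hw_mean
  have h_norm (k) : ‖waveEigenvalue k * a k‖ = ‖cellFourierCoeff (fun x => (w x : ℂ)) k‖ := by
    rw [← ha, norm_neg]
  -- The test function is a partial Fourier sum of the periodic solution of `Δφ = w`.
  have h_phi := h_test _ (contDiff_re_trigPoly S a)
    fun x m => congrArg Complex.re (isPeriodic_trigPoly S a x m)
  simp only [lap_re_trigPoly, ha] at h_phi
  rw [integral_mul_re_trigPoly_cellFourierCoeff (hw.integrable one_le_two)] at h_phi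
  have h_hess :=
    mul_le_mul_of_nonneg_left (integral_frobSq_hess_add_euclSq_grad_re_trigPoly_le S a) hq
  simp only [h_norm] at h_hess
  linarith

theorem ae_eq_zero_of_integral_mul_lap_le {q : ℝ} (hw : MemLp w 2 (cellVolume n))
    (hw_mean : ∫ x in unitCell n, w x = 0) (hq : 0 ≤ q)
    (hq_lt : q * (1 + 1 / (4 * Real.pi ^ 2)) < 1)
    (h_test : ∀ φ : (Fin n → ℝ) → ℝ, ContDiff ℝ 2 φ → IsPeriodic φ →
      ∫ x in unitCell n, w x * lap φ x ≤ ((∫ x in unitCell n, w x ^ 2) +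
        q * ∫ x in unitCell n, (frobSq (hess φ x) + euclSq (grad φ x))) / 2) :
    w =ᵐ[cellVolume n] 0 := by
  have h_parseval := hasSum_norm_sq_cellFourierCoeff hw.ofReal
  simp only [RCLike.ofReal_eq_complex_ofReal, Complex.norm_real, Real.norm_eq_abs, sq_abs]
    at h_parseval
  have h_le : ∫ x in unitCell n, w x ^ 2 ≤
      (∫ x in unitCell n, w x ^ 2) / (2 - q * (1 + 1 / (4 * Real.pi ^ 2))) :=
    hasSum_le_of_sum_le h_parseval fun S => by
      rw [le_div_iff₀' (by linarith)]
      exact sum_norm_sq_cellFourierCoeff_le hw hw_mean hq h_test S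
  rw [le_div_iff₀' (by linarith)] at h_le
  have h_nonneg : 0 ≤ ∫ x in unitCell n, w x ^ 2 := integral_nonneg fun x => sq_nonneg _
  have h_zero : ∫ x in unitCell n, w x ^ 2 = 0 := by nlinarith
  filter_upwards [(integral_eq_zero_iff_of_nonneg (fun x => sq_nonneg (w x))
    hw.integrable_sq).1 h_zero] with x hx
  exact pow_eq_zero_iff two_ne_zero |>.1 hx

end PoissonTest

section CordesInequality

variable {n : ℕ}

lemma frobSq_nonneg (M : Matrix (Fin n) (Fin n) ℝ) : 0 ≤ frobSq M :=
  Finset.sum_nonneg fun _ _ => Finset.sum_nonneg fun _ _ => sq_nonneg _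

lemma euclSq_nonneg (v : Fin n → ℝ) : 0 ≤ euclSq v :=
  Finset.sum_nonneg fun _ _ => sq_nonneg _

lemma sq_entry_le_frobSq (M : Matrix (Fin n) (Fin n) ℝ) (i j : Fin n) : M i j ^ 2 ≤ frobSq M :=
  (Finset.single_le_sum (f := fun j => M i j ^ 2) (fun _ _ => sq_nonneg _)
    (Finset.mem_univ j)).trans
      (Finset.single_le_sum (f := fun i => ∑ j, M i j ^ 2)
        (fun _ _ => Finset.sum_nonneg fun _ _ => sq_nonneg _) (Finset.mem_univ i))

lemma sq_coord_le_euclSq (v : Fin n → ℝ) (i : Fin n) : v i ^ 2 ≤ euclSq v :=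
  Finset.single_le_sum (f := fun i => v i ^ 2) (fun _ _ => sq_nonneg _) (Finset.mem_univ i)

lemma frobSq_pos_of_trace_ne_zero {M : Matrix (Fin n) (Fin n) ℝ} (hM : M.trace ≠ 0) :
    0 < frobSq M := by
  obtain ⟨i, -, hi⟩ := Finset.exists_ne_zero_of_sum_ne_zero hM
  exact (sq_pos_of_ne_zero hi).trans_le (sq_entry_le_frobSq M i i)

lemma sq_frobInner_add_dotc_le (M H : Matrix (Fin n) (Fin n) ℝ) (v g : Fin n → ℝ) :
    (frobInner M H + dotc v g) ^ 2 ≤ (frobSq M + euclSq v) * (frobSq H + euclSq g) := by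
  have h_cauchy := Finset.sum_mul_sq_le_sq_mul_sq Finset.univ
    (Sum.elim (fun p : Fin n × Fin n => M p.1 p.2) v) (Sum.elim (fun p => H p.1 p.2) g)
  simpa only [frobInner, dotc, frobSq, euclSq, Fintype.sum_sum_type, Fintype.sum_prod_type,
    Sum.elim_inl, Sum.elim_inr] using h_cauchy

lemma mul_frobInner_add_dotc_sub_trace (c : ℝ) (M H : Matrix (Fin n) (Fin n) ℝ)
    (v g : Fin n → ℝ) :
    c * (frobInner M H + dotc v g) - H.trace = frobInner (c • M - 1) H + dotc (c • v) g := by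
  simp only [frobInner, dotc, Matrix.trace, Matrix.diag, Matrix.sub_apply, Matrix.smul_apply,
    Matrix.one_apply, Pi.smul_apply, smul_eq_mul, sub_mul, ite_mul, one_mul, zero_mul,
    Finset.sum_sub_distrib, Finset.sum_ite_eq, Finset.mem_univ, if_true, mul_add, Finset.mul_sum,
    mul_assoc]
  ring

lemma frobSq_smul_sub_one_add_euclSq_smul (c : ℝ) (M : Matrix (Fin n) (Fin n) ℝ)
    (v : Fin n → ℝ) :
    frobSq (c • M - 1) + euclSq (c • v) =
      c ^ 2 * (frobSq M + euclSq v) - 2 * c * M.trace + n := by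
  have h_entry (i j : Fin n) : (c * M i j - (1 : Matrix (Fin n) (Fin n) ℝ) i j) ^ 2 =
      c ^ 2 * M i j ^ 2 - (if i = j then 2 * c * M i j else 0) + if i = j then 1 else 0 := by
    rw [Matrix.one_apply]
    split_ifs <;> ring
  simp only [frobSq, euclSq, Matrix.trace, Matrix.diag, Matrix.sub_apply, Matrix.smul_apply,
    Pi.smul_apply, smul_eq_mul, h_entry, mul_pow, Finset.sum_add_distrib, Finset.sum_sub_distrib,
    Finset.sum_ite_eq, Finset.mem_univ, if_true, mul_add, Finset.mul_sum, Finset.sum_const,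
    Finset.card_univ, Fintype.card_fin, nsmul_eq_mul, mul_one]
  ring

theorem sq_gam_mul_sub_trace_le {A : (Fin n → ℝ) → Matrix (Fin n) (Fin n) ℝ}
    {b : (Fin n → ℝ) → Fin n → ℝ} {x : Fin n → ℝ} {δ : ℝ} (h_trace : (A x).trace ≠ 0)
    (h_cordes : (n - 1 + δ) * (frobSq (A x) + euclSq (b x)) ≤ (A x).trace ^ 2)
    (H : Matrix (Fin n) (Fin n) ℝ) (g : Fin n → ℝ) :
    (gam A b x * (frobInner (A x) H + dotc (b x) g) - H.trace) ^ 2 ≤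
      (1 - δ) * (frobSq H + euclSq g) := by
  have h_pos : 0 < frobSq (A x) + euclSq (b x) :=
    add_pos_of_pos_of_nonneg (frobSq_pos_of_trace_ne_zero h_trace) (euclSq_nonneg _)
  have h_ratio : n - 1 + δ ≤ (A x).trace ^ 2 / (frobSq (A x) + euclSq (b x)) :=
    (le_div_iff₀ h_pos).2 h_cordes
  have h_defect : frobSq (gam A b x • A x - 1) + euclSq (gam A b x • b x) ≤ 1 - δ := by
    calc frobSq (gam A b x • A x - 1) + euclSq (gam A b x • b x)
        = n - (A x).trace ^ 2 / (frobSq (A x) + euclSq (b x)) := by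
          rw [frobSq_smul_sub_one_add_euclSq_smul, gam]
          field_simp
          ring
      _ ≤ 1 - δ := by linarith
  rw [mul_frobInner_add_dotc_sub_trace]
  exact (sq_frobInner_add_dotc_le _ _ _ _).trans
    (mul_le_mul_of_nonneg_right h_defect (add_nonneg (frobSq_nonneg H) (euclSq_nonneg g)))

end CordesInequality

section Coefficients

variable {n : ℕ} {A : (Fin n → ℝ) → Matrix (Fin n) (Fin n) ℝ} {b : (Fin n → ℝ) → Fin n → ℝ}
  {δ : ℝ} {φ : (Fin n → ℝ) → ℝ}

/-- The nondivergence-form operator `A : D²φ + b · ∇φ`. -/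
def nondivOp (A : (Fin n → ℝ) → Matrix (Fin n) (Fin n) ℝ) (b : (Fin n → ℝ) → Fin n → ℝ)
    (φ : (Fin n → ℝ) → ℝ) (x : Fin n → ℝ) : ℝ :=
  frobInner (A x) (hess φ x) + dotc (b x) (grad φ x)

/-- Bounded coefficients on the unit cell satisfying the Cordes condition
`(|A|² + |b|²) / (tr A)² ≤ 1 / (n - 1 + δ)`, written without division. The lower bound on `δ` is
`(1 - δ) (1 + 1 / (4π²)) < 1`, where `4π²` is the spectral gap of the Laplacian on the torus. -/
structure CordesCoefficients (A : (Fin n → ℝ) → Matrix (Fin n) (Fin n) ℝ)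
    (b : (Fin n → ℝ) → Fin n → ℝ) (δ : ℝ) : Prop where
  aemeasurable_matrix : ∀ i j, AEMeasurable (fun x => A x i j) (cellVolume n)
  aemeasurable_drift : ∀ i, AEMeasurable (fun x => b x i) (cellVolume n)
  exists_bound : ∃ C : ℝ, ∀ᵐ x ∂cellVolume n, frobSq (A x) + euclSq (b x) ≤ C
  trace_ne_zero : ∀ᵐ x ∂cellVolume n, (A x).trace ≠ 0
  cordes : ∀ᵐ x ∂cellVolume n,
    (n - 1 + δ) * (frobSq (A x) + euclSq (b x)) ≤ (A x).trace ^ 2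
  lt_delta : 1 / (1 + 4 * Real.pi ^ 2) < δ

lemma memLp_top_of_sq_le {X : Type*} [MeasurableSpace X] {μ : Measure X} {f : X → ℝ} {C : ℝ}
    (hf : AEMeasurable f μ) (hC : ∀ᵐ x ∂μ, f x ^ 2 ≤ C) : MemLp f ⊤ μ :=
  memLp_top_of_bound hf.aestronglyMeasurable √C (hC.mono fun _ hx => Real.abs_le_sqrt hx)

namespace CordesCoefficients

lemma one_le_dim (h : CordesCoefficients A b δ) : 1 ≤ n := by
  obtain ⟨x, hx⟩ := h.trace_ne_zero.exists
  rcases n with _ | n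
  · exact absurd (Matrix.trace_fin_zero _) hx
  · omega

lemma delta_le_one (h : CordesCoefficients A b δ) : δ ≤ 1 := by
  obtain ⟨x, h_trace, h_cordes⟩ := (h.trace_ne_zero.and h.cordes).exists
  have h_defect := (sq_nonneg _).trans (sq_gam_mul_sub_trace_le h_trace h_cordes (A x) 0)
  have h_pos : 0 < frobSq (A x) + euclSq (0 : Fin n → ℝ) :=
    add_pos_of_pos_of_nonneg (frobSq_pos_of_trace_ne_zero h_trace) (euclSq_nonneg _)
  exact sub_nonneg.1 (nonneg_of_mul_nonneg_left h_defect h_pos)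

lemma memLp_matrix (h : CordesCoefficients A b δ) (i j : Fin n) :
    MemLp (fun x => A x i j) ⊤ (cellVolume n) := by
  obtain ⟨C, hC⟩ := h.exists_bound
  refine memLp_top_of_sq_le (C := C) (h.aemeasurable_matrix i j) ?_
  filter_upwards [hC] with x hx
  linarith [sq_entry_le_frobSq (A x) i j, euclSq_nonneg (b x)]

lemma memLp_drift (h : CordesCoefficients A b δ) (i : Fin n) :
    MemLp (fun x => b x i) ⊤ (cellVolume n) := by
  obtain ⟨C, hC⟩ := h.exists_bound
  refine memLp_top_of_sq_le (C := C) (h.aemeasurable_drift i) ?_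
  filter_upwards [hC] with x hx
  linarith [sq_coord_le_euclSq (b x) i, frobSq_nonneg (A x)]

lemma memLp_nondivOp (h : CordesCoefficients A b δ) (hφ : ContDiff ℝ 2 φ) :
    MemLp (nondivOp A b φ) ⊤ (cellVolume n) := by
  have h_hess (i j : Fin n) : MemLp (fun x => hess φ x i j) ⊤ (cellVolume n) :=
    memLp_top_cellVolume_of_continuous ((continuous_hess hφ).matrix_elem i j)
  have h_grad (i : Fin n) : MemLp (fun x => grad φ x i) ⊤ (cellVolume n) :=
    memLp_top_cellVolume_of_continuous
      ((continuous_apply i).comp (continuous_grad (hφ.of_le one_le_two)))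
  exact (memLp_finsetSum _ fun i _ => memLp_finsetSum _ fun j _ =>
    (h_hess i j).mul' (h.memLp_matrix i j)).add
      (memLp_finsetSum _ fun i _ => (h_grad i).mul' (h.memLp_drift i))

lemma integrable_mul_nondivOp (h : CordesCoefficients A b δ) (hφ : ContDiff ℝ 2 φ)
    {g : (Fin n → ℝ) → ℝ} (hg : Integrable g (cellVolume n)) :
    Integrable (fun x => g x * nondivOp A b φ x) (cellVolume n) :=
  hg.mul_of_top_left (h.memLp_nondivOp hφ)

lemma gam_ne_zero (h : CordesCoefficients A b δ) : ∀ᵐ x ∂cellVolume n, gam A b x ≠ 0 := by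
  filter_upwards [h.trace_ne_zero] with x hx
  exact div_ne_zero hx
    (add_pos_of_pos_of_nonneg (frobSq_pos_of_trace_ne_zero hx) (euclSq_nonneg _)).ne'

lemma aemeasurable_gam (h : CordesCoefficients A b δ) : AEMeasurable (gam A b) (cellVolume n) := by
  have h_matrix := h.aemeasurable_matrix
  have h_drift := h.aemeasurable_drift
  unfold gam Matrix.trace frobSq euclSq
  simp only [Matrix.diag_apply]
  fun_prop

lemma memLp_inv_gam (h : CordesCoefficients A b δ) :
    MemLp (fun x => (gam A b x)⁻¹) ⊤ (cellVolume n) := by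
  obtain ⟨C, hC⟩ := h.exists_bound
  have h_dim : (1 : ℝ) ≤ n := by exact_mod_cast h.one_le_dim
  have h_delta : 0 < δ := lt_trans (by positivity) h.lt_delta
  refine memLp_top_of_sq_le (C := C / (n - 1 + δ)) h.aemeasurable_gam.inv ?_
  filter_upwards [h.trace_ne_zero, h.cordes, hC] with x h_trace h_cordes h_bound
  have h_nonneg : 0 ≤ frobSq (A x) + euclSq (b x) :=
    add_nonneg (frobSq_nonneg _) (euclSq_nonneg _)
  rw [gam, inv_div, div_pow, div_le_div_iff₀ (sq_pos_of_ne_zero h_trace) (by linarith)]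
  calc (frobSq (A x) + euclSq (b x)) ^ 2 * (n - 1 + δ)
      = (frobSq (A x) + euclSq (b x)) * ((n - 1 + δ) * (frobSq (A x) + euclSq (b x))) := by ring
    _ ≤ C * (A x).trace ^ 2 := mul_le_mul h_bound h_cordes
        (mul_nonneg (by linarith) h_nonneg) (h_nonneg.trans h_bound)

lemma mul_lap_le (h : CordesCoefficients A b δ) (φ g : (Fin n → ℝ) → ℝ) :
    ∀ᵐ x ∂cellVolume n, (gam A b x)⁻¹ * g x * lap φ x ≤ g x * nondivOp A b φ x +
      (((gam A b x)⁻¹ * g x) ^ 2 +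
        (1 - δ) * (frobSq (hess φ x) + euclSq (grad φ x))) / 2 := by
  filter_upwards [h.trace_ne_zero, h.cordes, h.gam_ne_zero] with x h_trace h_cordes h_gam
  have h_defect : (gam A b x * nondivOp A b φ x - lap φ x) ^ 2 ≤
      (1 - δ) * (frobSq (hess φ x) + euclSq (grad φ x)) :=
    sq_gam_mul_sub_trace_le h_trace h_cordes (hess φ x) (grad φ x)
  have h_split : g x * nondivOp A b φ x =
      (gam A b x)⁻¹ * g x * (gam A b x * nondivOp A b φ x) := by
    field_simp
  rw [h_split]
  linarith [sq_nonneg ((gam A b x)⁻¹ * g x + (gam A b x * nondivOp A b φ x - lap φ x))]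

end CordesCoefficients

end Coefficients

section VeryWeakSolutions

variable {n : ℕ} {A : (Fin n → ℝ) → Matrix (Fin n) (Fin n) ℝ} {b : (Fin n → ℝ) → Fin n → ℝ}
  {δ : ℝ} {g r u : (Fin n → ℝ) → ℝ}

/-- Square-integrable very weak solutions of the stationary Fokker–Planck–Kolmogorov equation
`D² : (A u) - div (b u) = 0` on the torus, with periodic `C²` test functions. -/
structure IsVeryWeakSolution (A : (Fin n → ℝ) → Matrix (Fin n) (Fin n) ℝ)
    (b : (Fin n → ℝ) → Fin n → ℝ) (u : (Fin n → ℝ) → ℝ) : Prop where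
  memLp_two : MemLp u 2 (cellVolume n)
  integral_mul_nondivOp : ∀ φ : (Fin n → ℝ) → ℝ, ContDiff ℝ 2 φ → IsPeriodic φ →
    ∫ x in unitCell n, u x * nondivOp A b φ x = 0

lemma IsVeryWeakSolution.sub_const_mul (hAb : CordesCoefficients A b δ)
    (hu : IsVeryWeakSolution A b u) (hr : IsVeryWeakSolution A b r) (c : ℝ) :
    IsVeryWeakSolution A b fun x => u x - c * r x where
  memLp_two := hu.memLp_two.sub (hr.memLp_two.const_mul c)
  integral_mul_nondivOp φ hφ hφ_per := by
    have h_int {f : (Fin n → ℝ) → ℝ} (hf : IsVeryWeakSolution A b f) :=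
      hAb.integrable_mul_nondivOp hφ (hf.memLp_two.integrable one_le_two)
    simp only [sub_mul, mul_assoc]
    rw [integral_sub (h_int hu) ((h_int hr).const_mul c), integral_const_mul,
      hu.integral_mul_nondivOp φ hφ hφ_per, hr.integral_mul_nondivOp φ hφ hφ_per, mul_zero,
      sub_zero]

lemma IsVeryWeakSolution.memLp_inv_gam_mul (hAb : CordesCoefficients A b δ)
    (hg : IsVeryWeakSolution A b g) : MemLp (fun x => (gam A b x)⁻¹ * g x) 2 (cellVolume n) :=
  hg.memLp_two.mul' hAb.memLp_inv_gam

lemma IsVeryWeakSolution.integral_mul_lap_le (hAb : CordesCoefficients A b δ)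
    (hg : IsVeryWeakSolution A b g) {φ : (Fin n → ℝ) → ℝ} (hφ : ContDiff ℝ 2 φ)
    (hφ_per : IsPeriodic φ) :
    ∫ x in unitCell n, (gam A b x)⁻¹ * g x * lap φ x ≤
      ((∫ x in unitCell n, ((gam A b x)⁻¹ * g x) ^ 2) +
        (1 - δ) * ∫ x in unitCell n, (frobSq (hess φ x) + euclSq (grad φ x))) / 2 := by
  have hw := hg.memLp_inv_gam_mul hAb
  have h_lap : Integrable (fun x => (gam A b x)⁻¹ * g x * lap φ x) (cellVolume n) :=
    (hw.integrable one_le_two).mul_of_top_left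
      (memLp_top_cellVolume_of_continuous (continuous_hess hφ).matrix_trace)
  have h_sol := hAb.integrable_mul_nondivOp hφ (hg.memLp_two.integrable one_le_two)
  have h_jet : Integrable (fun x => (1 - δ) * (frobSq (hess φ x) + euclSq (grad φ x)))
      (cellVolume n) :=
    ((integrable_frobSq_hess hφ).add (integrable_euclSq_grad (hφ.of_le one_le_two))).const_mul _
  have h_young : Integrable (fun x => (((gam A b x)⁻¹ * g x) ^ 2 +
      (1 - δ) * (frobSq (hess φ x) + euclSq (grad φ x))) / 2) (cellVolume n) :=
    (hw.integrable_sq.add h_jet).div_const 2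
  refine (integral_mono_ae h_lap (h_sol.add h_young) (hAb.mul_lap_le φ g)).trans_eq ?_
  rw [integral_add' h_sol h_young, hg.integral_mul_nondivOp φ hφ hφ_per, zero_add, integral_div,
    integral_add hw.integrable_sq h_jet, integral_const_mul]

theorem IsVeryWeakSolution.ae_eq_zero (hAb : CordesCoefficients A b δ)
    (hg : IsVeryWeakSolution A b g) (hg_mean : ∫ x in unitCell n, (gam A b x)⁻¹ * g x = 0) :
    g =ᵐ[cellVolume n] 0 := by
  have h_delta : (1 - δ) * (1 + 1 / (4 * Real.pi ^ 2)) < 1 := by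
    have h_lt := hAb.lt_delta
    field_simp at h_lt ⊢
    linarith
  have hw_zero := ae_eq_zero_of_integral_mul_lap_le (hg.memLp_inv_gam_mul hAb) hg_mean
    (sub_nonneg.2 hAb.delta_le_one) h_delta fun φ hφ hφ_per => hg.integral_mul_lap_le hAb hφ hφ_per
  filter_upwards [hw_zero, hAb.gam_ne_zero] with x hx h_gam
  exact (mul_eq_zero.1 hx).resolve_left (inv_ne_zero h_gam)

theorem IsVeryWeakSolution.exists_ae_eq_const_mul (hAb : CordesCoefficients A b δ)
    (hr : IsVeryWeakSolution A b r) (hr_ne : ¬r =ᵐ[cellVolume n] 0)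
    (hu : IsVeryWeakSolution A b u) : ∃ c : ℝ, ∀ᵐ x ∂cellVolume n, u x = c * r x := by
  have h_int {f : (Fin n → ℝ) → ℝ} (hf : IsVeryWeakSolution A b f) :
      Integrable (fun x => (gam A b x)⁻¹ * f x) (cellVolume n) :=
    (hf.memLp_inv_gam_mul hAb).integrable one_le_two
  have hr_mean : ∫ x in unitCell n, (gam A b x)⁻¹ * r x ≠ 0 := fun h => hr_ne (hr.ae_eq_zero hAb h)
  set c := (∫ x in unitCell n, (gam A b x)⁻¹ * u x) / ∫ x in unitCell n, (gam A b x)⁻¹ * r x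
    with hc
  refine ⟨c, ?_⟩
  have h_zero : (fun x => u x - c * r x) =ᵐ[cellVolume n] 0 := by
    refine (hu.sub_const_mul hAb hr c).ae_eq_zero hAb ?_
    simp only [mul_sub, mul_left_comm _ c]
    rw [integral_sub (h_int hu) ((h_int hr).const_mul c), integral_const_mul, hc,
      div_mul_cancel₀ _ hr_mean, sub_self]
  exact h_zero.mono fun x hx => sub_eq_zero.1 hx

theorem stmt_1_general (hAb : CordesCoefficients A b δ)
    (hr : IsVeryWeakSolution A b r) (hr_per : IsPeriodic r) (hr_ne : ¬r =ᵐ[cellVolume n] 0)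
    (hu : IsVeryWeakSolution A b u) (hu_per : IsPeriodic u) :
    ∃ c : ℝ, ∀ᵐ x, u x = c * r x := by
  obtain ⟨c, hc⟩ := hr.exists_ae_eq_const_mul hAb hr_ne hu
  exact ⟨c, ae_of_ae_cellVolume (fun x k => by rw [hr_per x k, hu_per x k]) hc⟩

end VeryWeakSolutions

section SettingB

variable {n : ℕ} {A : (Fin n → ℝ) → Matrix (Fin n) (Fin n) ℝ} {b : (Fin n → ℝ) → Fin n → ℝ}
  {lam Lam δ : ℝ} {r : (Fin n → ℝ) → ℝ}

lemma SettingB.ae_trace_pos (hn : 1 ≤ n) (hAb : SettingB A b lam Lam δ) :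
    ∀ᵐ x, 0 < (A x).trace := by
  filter_upwards [hAb.ellip] with x hx
  have h_diag (i : Fin n) : lam ≤ A x i i := by
    simpa [euclSq, dotc, Pi.single_apply] using (hx (Pi.single i 1)).1
  have : Nonempty (Fin n) := ⟨⟨0, hn⟩⟩
  exact Finset.sum_pos (fun i _ => hAb.lam_pos.trans_le (h_diag i)) Finset.univ_nonempty

lemma SettingB.cordesCoefficients (hn : 1 ≤ n) (hAb : SettingB A b lam Lam δ) :
    CordesCoefficients A b δ := by
  have h_dim : (1 : ℝ) ≤ n := by exact_mod_cast hn
  have h_delta : 1 / (1 + 4 * Real.pi ^ 2) < δ := by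
    refine lt_of_le_of_lt ?_ hAb.delta_mem.1
    rw [div_le_div_iff₀ (by positivity) (by positivity)]
    nlinarith [sq_nonneg Real.pi]
  have h_delta_pos : 0 < δ := lt_trans (by positivity) h_delta
  obtain ⟨CA, hCA⟩ := hAb.bddA
  obtain ⟨Cb, hCb⟩ := hAb.bddb
  refine ⟨fun i j => (hAb.measA i j).aemeasurable, fun i => (hAb.measb i).aemeasurable,
    ⟨CA + Cb, ae_restrict_of_ae ?_⟩, ae_restrict_of_ae ?_, ae_restrict_of_ae ?_, h_delta⟩
  · filter_upwards [hCA, hCb] with x hA hb using add_le_add hA hb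
  · filter_upwards [hAb.ae_trace_pos hn] with x hx using hx.ne'
  · filter_upwards [hAb.ae_trace_pos hn, hAb.cordes] with x h_trace h_cordes
    rw [div_le_div_iff₀ (pow_pos h_trace 2) (by linarith)] at h_cordes
    linarith

lemma IsInvariantMeasure.isVeryWeakSolution (hr : IsInvariantMeasure A b r) :
    IsVeryWeakSolution A b r :=
  ⟨(memLp_two_iff_integrable_sq hr.1.aestronglyMeasurable).2 hr.2.2.1, hr.2.2.2.2⟩

lemma IsInvariantMeasure.not_ae_eq_zero (hr : IsInvariantMeasure A b r) :
    ¬r =ᵐ[cellVolume n] 0 := fun h_zero => by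
  have h_mass := hr.2.2.2.1
  rw [integral_congr_ae h_zero] at h_mass
  simp at h_mass

end SettingB

/-- In Setting B, any very weak solution `u ∈ L²_per(Y)` of the
homogeneous stationary FPK problem is a.e. a constant multiple of the invariant
measure `r`. -/
theorem stmt_1 {n : ℕ} (hn : 1 ≤ n)
    (A : (Fin n → ℝ) → Matrix (Fin n) (Fin n) ℝ) (b : (Fin n → ℝ) → Fin n → ℝ)
    (lam Lam δ : ℝ) (hAB : SettingB A b lam Lam δ)
    (r : (Fin n → ℝ) → ℝ) (hr : IsInvariantMeasure A b r)
    (u : (Fin n → ℝ) → ℝ) (hu_meas : Measurable u) (hu_per : IsPeriodic u)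
    (hu_L2 : IntegrableOn (fun x => (u x) ^ 2) (unitCell n))
    (hu_sol : ∀ φ : (Fin n → ℝ) → ℝ, ContDiff ℝ 2 φ → IsPeriodic φ →
      (∫ x in unitCell n,
        u x * (frobInner (A x) (hess φ x) + dotc (b x) (grad φ x))) = 0) :
    ∃ c : ℝ, ∀ᵐ x ∂(volume : Measure (Fin n → ℝ)), u x = c * r x := by
  exact stmt_1_general (hAB.cordesCoefficients hn) hr.isVeryWeakSolution hr.2.1 hr.not_ae_eq_zero
    ⟨(memLp_two_iff_integrable_sq hu_meas.aestronglyMeasurable).2 hu_L2, hu_sol⟩ hu_per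
end
end
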